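/- For every graph G, ξ(G) ≤ 2^{8·λ(G)}: if G is λ-flat, then G has an embedding in the sphere with at most 2^{8λ} crossings per edge. -/

import Mathlib

/-!
Definitions for wall-by-wall distance, λ-flat graphs and ξ-nearly planar graphs,
following Grigoriev, Koutsonas and Thilikos, "Nearly Planar Graphs and λ-flat Graphs".

A plane graph is modelled combinatorially as a simple graph equipped with a rotation
system (a cyclic order of the edges incident to each vertex) that is planar, i.e.
satisfies Euler's formula (with faces counted as orbits of the face-tracing successor
on darts, corrected for isolated vertices and the number of connected components).

A graph embedding in the sphere (where edges may cross, but only at points that are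
not vertices) is modelled topologically by a `Drawing`: an injective placement of the
vertices on the unit sphere of `ℝ³` together with, for each edge, a simple arc joining
the images of its endpoints whose interior avoids all vertices.
-/

namespace WBW

/-- The set of edges of `G` incident to the vertex `v`. -/
def incidentSet {V : Type*} (G : SimpleGraph V) (v : V) : Set (Sym2 V) :=
  {e | e ∈ G.edgeSet ∧ v ∈ e}

/-- A simple graph together with a rotation system: for every vertex `v`, a
permutation of `Sym2 V` which fixes every non-incident edge and is a single cycle on
the set of edges incident to `v` (the cyclic order `σ_v` of the drawing). -/
structure RotationSystem (V : Type*) where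
  G : SimpleGraph V
  rot : V → Equiv.Perm (Sym2 V)
  rot_cycleOn : ∀ v, (rot v).IsCycleOn (incidentSet G v)
  rot_fixed : ∀ v, ∀ e ∉ incidentSet G v, rot v e = e

variable {V : Type*}

/-- The face-tracing successor on darts: the dart `(u,v)` is followed by the dart
leaving `v` along the edge succeeding `s(u,v)` in the cyclic order around `v`. -/
noncomputable def RotationSystem.faceNext (R : RotationSystem V) (d : R.G.Dart) :
    R.G.Dart :=
  have hmem : d.edge ∈ incidentSet R.G d.toProd.2 :=
    ⟨d.edge_mem, by rcases d with ⟨⟨a, b⟩, h⟩; simp [SimpleGraph.Dart.edge]⟩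
  have hmem' : R.rot d.toProd.2 d.edge ∈ incidentSet R.G d.toProd.2 :=
    (R.rot_cycleOn d.toProd.2).1.mapsTo hmem
  ⟨(d.toProd.2, Sym2.Mem.other hmem'.2), by
    have h := Sym2.other_spec hmem'.2
    have h2 : R.rot d.toProd.2 d.edge ∈ R.G.edgeSet := hmem'.1
    rw [← h] at h2
    exact h2⟩

/-- The number of faces of a rotation system: the number of orbits of the
face-tracing successor on darts. -/
noncomputable def RotationSystem.numFaces (R : RotationSystem V) : ℕ :=
  Nat.card (Quot (fun a b : R.G.Dart => R.faceNext a = b))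

/-- A rotation system is plane (it is an embedding of the graph in the sphere without
crossings) iff it satisfies Euler's formula, componentwise; isolated vertices are
accounted for separately, since they carry no dart. -/
def RotationSystem.IsPlane (R : RotationSystem V) : Prop :=
  Nat.card V + R.numFaces + Nat.card {v : V | ∀ w, ¬ R.G.Adj v w} =
    Nat.card R.G.edgeSet + 2 * Nat.card R.G.ConnectedComponent

/-- Two edges are attached if they share a vertex `v` and appear consecutively in the
cyclic order `σ_v` or its inverse. -/
def Attached (R : RotationSystem V) (e e' : Sym2 V) : Prop :=
  ∃ v : V, e ∈ incidentSet R.G v ∧ e' ∈ incidentSet R.G v ∧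
    (R.rot v e = e' ∨ R.rot v e' = e)

/-- A wall-by-wall walk: a nonempty sequence of distinct edges of `R.G` in which
every two consecutive edges are attached. -/
def IsWbwWalk (R : RotationSystem V) (L : List (Sym2 V)) : Prop :=
  L ≠ [] ∧ L.Nodup ∧ (∀ e ∈ L, e ∈ R.G.edgeSet) ∧ L.Chain' (Attached R)

/-- An `(x,y)`-wall-by-wall walk: a wall-by-wall walk whose first edge is incident to
`x` and whose last edge is incident to `y`. -/
def IsWbwWalkFromTo (R : RotationSystem V) (x y : V) (L : List (Sym2 V)) : Prop :=
  IsWbwWalk R L ∧ (∃ e, L.head? = some e ∧ x ∈ e) ∧ (∃ e, L.getLast? = some e ∧ y ∈ e)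

/-- The wall-by-wall distance between `x` and `y`: the least number of edges of an
`(x,y)`-wall-by-wall walk (`⊤` if there is no such walk). -/
noncomputable def wbwDist (R : RotationSystem V) (x y : V) : ℕ∞ :=
  sInf {n : ℕ∞ | ∃ L, IsWbwWalkFromTo R x y L ∧ (L.length : ℕ∞) = n}

/-- The `λ`-power of a plane graph: keep all edges and make adjacent all pairs of
vertices at wall-by-wall distance at most `λ`. -/
def RotationSystem.power (R : RotationSystem V) (l : ℕ) : SimpleGraph V :=
  R.G ⊔ SimpleGraph.fromRel (fun x y => wbwDist R x y ≤ (l : ℕ∞))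

/-- `H` is a subgraph of `G` via the injection `τ`. -/
def SubgraphVia {U V : Type*} (H : SimpleGraph U) (G : SimpleGraph V) (τ : U → V) :
    Prop :=
  Function.Injective τ ∧ ∀ x y, H.Adj x y → G.Adj (τ x) (τ y)

/-- A graph is `λ`-flat if it is a subgraph of the `λ`-power of some plane graph. -/
def IsFlat (l : ℕ) {V : Type*} (G : SimpleGraph V) : Prop :=
  ∃ (W : Type) (_ : Finite W) (R : RotationSystem W) (τ : V → W),
    R.IsPlane ∧ SubgraphVia G (R.power l) τ

/-- The unit sphere in `ℝ³`. -/
def unitSphere : Set (EuclideanSpace ℝ (Fin 3)) := Metric.sphere 0 1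

/-- A drawing (embedding) of a graph in the sphere: vertices are placed injectively,
every edge is drawn as a simple arc joining the images of its two endpoints, and the
interior of every arc avoids all vertex images (so edges may meet, away from their
endpoints, only at points that are not vertices). -/
structure Drawing {V : Type*} (G : SimpleGraph V) where
  vmap : V → unitSphere
  vmap_inj : Function.Injective vmap
  arc : Sym2 V → C(Set.Icc (0 : ℝ) 1, unitSphere)
  arc_inj : ∀ e ∈ G.edgeSet, Function.Injective (arc e)
  arc_ends : ∀ e ∈ G.edgeSet,
    Sym2.map vmap e =
      s(arc e ⟨0, Set.mem_Icc.mpr (by norm_num)⟩, arc e ⟨1, Set.mem_Icc.mpr (by norm_num)⟩)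
  interior_avoids : ∀ e ∈ G.edgeSet, ∀ t : Set.Icc (0 : ℝ) 1,
    (t : ℝ) ≠ 0 → (t : ℝ) ≠ 1 → arc e t ∉ Set.range vmap

/-- The crossings of the edge `e` in a drawing: pairs consisting of another edge `e'`
and a point, not a vertex, lying on the arcs of both `e` and `e'`. -/
def crossingSet {V : Type*} {G : SimpleGraph V} (D : Drawing G) (e : Sym2 V) :
    Set (Sym2 V × unitSphere) :=
  {q | q.1 ∈ G.edgeSet ∧ q.1 ≠ e ∧ q.2 ∈ Set.range (D.arc e) ∧
    q.2 ∈ Set.range (D.arc q.1) ∧ q.2 ∉ Set.range D.vmap}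

/-- A graph is `ξ`-nearly planar if it has a drawing in the sphere in which every
edge is crossed at most `ξ` times. -/
def IsNearlyPlanar (x : ℕ) {V : Type*} (G : SimpleGraph V) : Prop :=
  ∃ D : Drawing G, ∀ e ∈ G.edgeSet,
    (crossingSet D e).Finite ∧ (crossingSet D e).ncard ≤ x

/-- `λ(G)`: the least `λ` for which `G` is `λ`-flat. -/
noncomputable def flatNum {V : Type*} (G : SimpleGraph V) : ℕ :=
  sInf {l | IsFlat l G}

/-- `ξ(G)`: the least `ξ` for which `G` is `ξ`-nearly planar. -/
noncomputable def nearNum {V : Type*} (G : SimpleGraph V) : ℕ :=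
  sInf {x | IsNearlyPlanar x G}

/-- A graph is 3-connected if it has more than 3 vertices and removing any at most 2
vertices leaves it connected. -/
def ThreeConnected {V : Type*} (G : SimpleGraph V) : Prop :=
  3 < Nat.card V ∧ ∀ s : Set V, s.ncard ≤ 2 → (G.induce sᶜ).Connected

/-- A plane graph is triangulated if every face is bounded by a triangle, i.e. every
orbit of the face-tracing successor has length exactly 3. -/
def RotationSystem.Triangulated (R : RotationSystem V) : Prop :=
  ∀ d : R.G.Dart, R.faceNext (R.faceNext (R.faceNext d)) = d ∧ R.faceNext d ≠ d

/-- `H` is a topological minor of `G`: some subdivision of `H` is a subgraph of `G`,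
equivalently the branch vertices embed injectively into `G` and the edges of `H` are
realized by internally disjoint paths of `G` avoiding the branch vertices. -/
def IsTopMinor {U V : Type*} (H : SimpleGraph U) (G : SimpleGraph V) : Prop :=
  ∃ τ : U → V, Function.Injective τ ∧
    ∃ P : ∀ ⦃x y : U⦄, H.Adj x y → G.Walk (τ x) (τ y),
      (∀ ⦃x y : U⦄ (h : H.Adj x y), (P h).IsPath) ∧
      (∀ ⦃x y : U⦄ (h : H.Adj x y), ∀ v ∈ (P h).support,
        v ∈ Set.range τ → v = τ x ∨ v = τ y) ∧
      (∀ ⦃x y x' y' : U⦄ (h : H.Adj x y) (h' : H.Adj x' y'), s(x, y) ≠ s(x', y') →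
        ∀ v, v ∈ (P h).support → v ∈ (P h').support → v ∈ Set.range τ)

/-- `H` is a contraction of `G`: `H` is obtained from `G` by contracting edges,
equivalently there is a surjection `V(G) → V(H)` with connected fibres such that the
edges of `H` are exactly the pairs of distinct fibres joined by an edge of `G`. -/
def IsContractionOf {U V : Type*} (H : SimpleGraph U) (G : SimpleGraph V) : Prop :=
  ∃ f : V → U, Function.Surjective f ∧
    (∀ u : U, (G.induce (f ⁻¹' {u})).Connected) ∧
    (∀ a b : U, H.Adj a b ↔ a ≠ b ∧ ∃ x y, G.Adj x y ∧ f x = a ∧ f y = b)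

/-- The medial graph of a plane graph `G`: its vertices are the edges of `G`, two of
them being adjacent iff they are attached (this is the dual of the radial graph). -/
def medial (R : RotationSystem V) : SimpleGraph {e : Sym2 V // e ∈ R.G.edgeSet} :=
  SimpleGraph.fromRel (fun e f => Attached R e.1 f.1)

/-- The `(n × n)`-grid graph. -/
def gridGraph (n : ℕ) : SimpleGraph (Fin n × Fin n) :=
  SimpleGraph.fromRel (fun a b =>
    (a.1 = b.1 ∧ (a.2 : ℕ) + 1 = (b.2 : ℕ)) ∨ (a.2 = b.2 ∧ (a.1 : ℕ) + 1 = (b.1 : ℕ)))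

/-- The faces of a rotation system: orbits of the face-tracing successor on darts. -/
def RotationSystem.Face (R : RotationSystem V) : Type _ :=
  Quot (fun a b : R.G.Dart => R.faceNext a = b)

/-- The edge `e` lies on the boundary of the face `F`. -/
def EdgeOnFace (R : RotationSystem V) (e : Sym2 V) (F : R.Face) : Prop :=
  ∃ d : R.G.Dart, Quot.mk _ d = F ∧ d.edge = e

/-- A wall-by-wall walk passes through the face `F` if two consecutive edges of the
walk both lie on the boundary of `F`. -/
def WalkThroughFace (R : RotationSystem V) (L : List (Sym2 V)) (F : R.Face) : Prop :=
  ∃ (l₁ : List (Sym2 V)) (e₁ e₂ : Sym2 V) (l₂ : List (Sym2 V)),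
    L = l₁ ++ e₁ :: e₂ :: l₂ ∧ EdgeOnFace R e₁ F ∧ EdgeOnFace R e₂ F

end WBW

/-!
A plane graph `R` becomes a triangulation of the sphere when four triangles are put around each of
its corners. Such a triangulation has a height function for which every vertex, except the two ends
of a base edge, has a higher and a lower neighbour; by Euler's formula each of these vertices is the
middle one of exactly one triangle on either side. Sweeping the sphere triangle by triangle, along
fronts on which the height increases, then lays the triangulation out in columns, and this gives a
straight-line drawing of the triangulation with its edges subdivided.

In this drawing, two attached edges of `R` are joined by a short path which meets no vertex and no
other edge of `R`. Hence an edge of a `λ`-flat graph, which follows a wall-by-wall walk with at most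
`λ` edges, can be routed along a path with at most `6λ` steps. After a perturbation into general
position two routes cross only near a shared node, and there at most four times. A node belongs to
a single edge `h` of `R`. Every edge is attached to at most four others, so all walks with at most
`λ` edges through `h` stay in a ball of at most `5 ^ (λ - 1)` edges. The ends of such a walk lie
among the at most `2 * 5 ^ (λ - 1)` ends of these edges, whence at most `4 * 25 ^ (λ - 1)` routes
use a given node.
-/

namespace WBW

/-! ### Heights on a triangulated sphere -/

/-- A triangulation, without loops, of a disjoint union of spheres, given by its darts: `rev`
reverses a dart, `nxt` walks around the triangle to the left of a dart, and `src` is the initial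
vertex. One dart of each component is chosen in `base`; Euler's formula, summed over the components,
then takes the form `euler` because there are three darts for every triangle. -/
structure SphereTriangulation (D X : Type*) [Fintype D] [Fintype X] where
  rev : D → D
  nxt : D → D
  src : D → X
  base : Finset D
  rev_rev : ∀ d, rev (rev d) = d
  nxt_nxt_nxt : ∀ d, nxt (nxt (nxt d)) = d
  src_nxt_eq : ∀ d, src (nxt d) = src (rev d)
  src_rev_ne : ∀ d, src (rev d) ≠ src d
  src_surjective : Function.Surjective src
  rotation_induction : ∀ Q : D → Prop, (∀ d, Q d → Q (nxt (rev d))) →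
    ∀ d d', src d = src d' → Q d → Q d'
  dart_induction : ∀ Q : D → Prop, (∀ d, Q d → Q (nxt d)) → (∀ d, Q d → Q (rev d)) →
    (∀ b ∈ base, Q b) → ∀ d, Q d
  base_src_injOn : Set.InjOn src base
  base_tgt_injOn : Set.InjOn (fun b ↦ src (rev b)) base
  base_src_ne_tgt : ∀ b ∈ base, ∀ b' ∈ base, src b ≠ src (rev b')
  euler : 6 * Fintype.card X = Fintype.card D + 12 * base.card

namespace SphereTriangulation

variable {D X : Type*} [Fintype D] [Fintype X] (T : SphereTriangulation D X)

attribute [simp] rev_rev nxt_nxt_nxt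

/-- The terminal vertex of a dart. -/
def tgt (d : D) : X := T.src (T.rev d)

@[simp] theorem src_rev (d : D) : T.src (T.rev d) = T.tgt d := rfl

@[simp] theorem tgt_rev (d : D) : T.tgt (T.rev d) = T.src d := by rw [tgt, rev_rev]

@[simp] theorem src_nxt (d : D) : T.src (T.nxt d) = T.tgt d := T.src_nxt_eq d

@[simp] theorem tgt_nxt_nxt (d : D) : T.tgt (T.nxt (T.nxt d)) = T.src d := by
  rw [← src_nxt, nxt_nxt_nxt]

theorem tgt_ne_src (d : D) : T.tgt d ≠ T.src d := T.src_rev_ne d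

theorem rev_injective : Function.Injective T.rev := Function.Involutive.injective T.rev_rev

theorem nxt_bijective : Function.Bijective T.nxt :=
  ⟨fun a b h ↦ by rw [← T.nxt_nxt_nxt a, h, nxt_nxt_nxt], fun a ↦ ⟨_, T.nxt_nxt_nxt a⟩⟩

/-- The poles, i.e. the source (`false`) and the target (`true`) of each base dart. -/
def pole (p : T.base × Bool) : X := if p.2 then T.tgt p.1 else T.src p.1

theorem pole_injective : Function.Injective T.pole := by
  rintro ⟨⟨b, hb⟩, _ | _⟩ ⟨⟨b', hb'⟩, _ | _⟩ h <;> simp only [pole, if_true, Bool.false_eq_true,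
    if_false] at h
  · simpa using T.base_src_injOn hb hb' h
  · exact absurd h (T.base_src_ne_tgt b hb b' hb')
  · exact absurd h.symm (T.base_src_ne_tgt b' hb' b hb)
  · simpa using T.base_tgt_injOn hb hb' h

/-- `x` is an endpoint of a base dart. -/
def IsPole (x : X) : Prop := x ∈ Set.range T.pole

variable {T} in
theorem isPole_src {b : D} (hb : b ∈ T.base) : T.IsPole (T.src b) := ⟨(⟨b, hb⟩, false), rfl⟩

variable {T} in
theorem isPole_tgt {b : D} (hb : b ∈ T.base) : T.IsPole (T.tgt b) := ⟨(⟨b, hb⟩, true), rfl⟩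

/-- The dart `d` goes upwards for the height function `y`. -/
def Up (y : X → ℝ) (d : D) : Prop := y (T.src d) < y (T.tgt d)

/-- A partial bipolar height function, defined on the vertex set `S`: every base dart goes up, base
darts occupy disjoint intervals of heights, and a vertex of `S` other than the poles has both a
higher and a lower neighbour in `S`. -/
structure BipolarOn (S : Finset X) (y : X → ℝ) : Prop where
  mem_of_isPole : ∀ x, T.IsPole x → x ∈ S
  injOn : Set.InjOn y S
  base_up : ∀ b ∈ T.base, T.Up y b
  base_disjoint : ∀ b ∈ T.base, ∀ b' ∈ T.base, b ≠ b' →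
    y (T.tgt b) < y (T.src b') ∨ y (T.tgt b') < y (T.src b)
  exists_nbr : ∀ x ∈ S, ∃ d, T.src d = x ∧ T.tgt d ∈ S
  exists_up : ∀ x ∈ S, ¬ T.IsPole x → ∃ d, T.src d = x ∧ T.tgt d ∈ S ∧ T.Up y d
  exists_down : ∀ x ∈ S, ¬ T.IsPole x → ∃ d, T.src d = x ∧ T.tgt d ∈ S ∧ T.Up y (T.rev d)

/-- A bipolar height function on all vertices. -/
abbrev Bipolar (y : X → ℝ) : Prop := T.BipolarOn Finset.univ y

theorem exists_nat_height_poles : ∃ f : T.base × Bool → ℕ, Function.Injective f ∧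
    (∀ b, f (b, false) < f (b, true)) ∧
    ∀ b b', b ≠ b' → f (b, true) < f (b', false) ∨ f (b', true) < f (b, false) := by
  let n : T.base → ℕ := fun b ↦ Fintype.equivFin _ b
  have n_injective : Function.Injective n := Fin.val_injective.comp (Equiv.injective _)
  refine ⟨fun p ↦ 2 * n p.1 + p.2.toNat, ?_, fun b ↦ by simp, fun b b' hb ↦ ?_⟩
  · rintro ⟨b, _ | _⟩ ⟨b', _ | _⟩ h <;> simp only [Bool.toNat_false, Bool.toNat_true] at h
    · rw [n_injective (by lia : n b = n b')]
    · lia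
    · lia
    · rw [n_injective (by lia : n b = n b')]
  · have := n_injective.ne hb
    simp only [Bool.toNat_false, Bool.toNat_true]
    lia

theorem exists_bipolarOn_poles : ∃ (S : Finset X) (y : X → ℝ), T.BipolarOn S y := by
  classical
  obtain ⟨f, f_injective, f_up, f_disjoint⟩ := T.exists_nat_height_poles
  let y : X → ℝ := Function.extend T.pole (fun p ↦ (f p : ℝ)) 0
  have y_pole (p) : y (T.pole p) = f p := T.pole_injective.extend_apply _ _ p
  have y_src {b} (hb : b ∈ T.base) : y (T.src b) = f (⟨b, hb⟩, false) := y_pole (⟨b, hb⟩, false)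
  have y_tgt {b} (hb : b ∈ T.base) : y (T.tgt b) = f (⟨b, hb⟩, true) := y_pole (⟨b, hb⟩, true)
  refine ⟨Finset.univ.filter T.IsPole, y, by simp, ?_, fun b hb ↦ ?_, fun b hb b' hb' hne ↦ ?_,
    fun x hx ↦ ?_, fun x hx hx' ↦ absurd (by simpa using hx) hx',
    fun x hx hx' ↦ absurd (by simpa using hx) hx'⟩
  · intro x hx x' hx' h
    obtain ⟨p, rfl⟩ : T.IsPole x := by simpa using hx
    obtain ⟨p', rfl⟩ : T.IsPole x' := by simpa using hx'
    rw [y_pole, y_pole, Nat.cast_inj] at h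
    rw [f_injective h]
  · rw [Up, y_src hb, y_tgt hb]
    exact_mod_cast f_up _
  · rw [y_src hb, y_tgt hb, y_src hb', y_tgt hb']
    exact_mod_cast f_disjoint _ _ (by simpa using hne)
  · obtain ⟨⟨⟨b, hb⟩, _ | _⟩, rfl⟩ : T.IsPole x := by simpa using hx
    · exact ⟨b, rfl, by simpa using isPole_tgt hb⟩
    · exact ⟨T.rev b, rfl, by simpa using isPole_src hb⟩

variable {T}

theorem BipolarOn.exists_open_triangle {S : Finset X} {y : X → ℝ} (h : T.BipolarOn S y)
    (hS : S ≠ Finset.univ) : ∃ d, T.src d ∈ S ∧ T.tgt d ∈ S ∧ T.tgt (T.nxt d) ∉ S := by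
  by_contra! hcon
  have tgt_mem (d : D) (hd : T.src d ∈ S) : T.tgt d ∈ S := by
    obtain ⟨e, he, he'⟩ := h.exists_nbr _ hd
    refine (T.rotation_induction (fun e ↦ T.src e ∈ S ∧ T.tgt e ∈ S) ?_ e d he ⟨he ▸ hd, he'⟩).2
    rintro e ⟨he, he'⟩
    exact ⟨by simpa using he, hcon _ he' (by simpa using he)⟩
  have src_mem : ∀ d, T.src d ∈ S := T.dart_induction _
    (fun d hd ↦ by simpa using tgt_mem d hd) tgt_mem
    (fun b hb ↦ h.mem_of_isPole _ (isPole_src hb))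
  refine hS (Finset.eq_univ_of_forall fun x ↦ ?_)
  obtain ⟨d, rfl⟩ := T.src_surjective x
  exact src_mem d

theorem BipolarOn.exists_between {S : Finset X} {y : X → ℝ} (h : T.BipolarOn S y) {d : D}
    (hs : T.src d ∈ S) (ht : T.tgt d ∈ S) :
    ∃ c, c ∉ y '' S ∧
      (y (T.src d) < c ∧ c < y (T.tgt d) ∨ y (T.tgt d) < c ∧ c < y (T.src d)) := by
  have exists_mem_Ioo {a b : ℝ} (hab : a < b) : ∃ c ∈ Set.Ioo a b, c ∉ y '' S :=
    ((Set.Ioo_infinite hab).sdiff (S.finite_toSet.image y)).nonempty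
  rcases lt_or_gt_of_ne fun e ↦ T.tgt_ne_src d (h.injOn ht hs e) with hlt | hlt
  · obtain ⟨c, hc, hcS⟩ := exists_mem_Ioo hlt
    exact ⟨c, hcS, .inr hc⟩
  · obtain ⟨c, hc, hcS⟩ := exists_mem_Ioo hlt
    exact ⟨c, hcS, .inl hc⟩

theorem BipolarOn.insert [DecidableEq X] {S : Finset X} {y : X → ℝ} (h : T.BipolarOn S y) {d : D}
    (hs : T.src d ∈ S) (ht : T.tgt d ∈ S) (hw : T.tgt (T.nxt d) ∉ S) {c : ℝ} (hcS : c ∉ y '' S)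
    (hc : y (T.src d) < c ∧ c < y (T.tgt d) ∨ y (T.tgt d) < c ∧ c < y (T.src d)) :
    T.BipolarOn (insert (T.tgt (T.nxt d)) S) (Function.update y (T.tgt (T.nxt d)) c) := by
  set w := T.tgt (T.nxt d) with hw_def
  set y' := Function.update y w c
  have y'_w : y' w = c := Function.update_self ..
  have y'_eq {x} (hx : x ∈ S) : y' x = y x := Function.update_of_ne (ne_of_mem_of_not_mem hx hw) ..
  have src_mem {b} (hb : b ∈ T.base) := h.mem_of_isPole _ (isPole_src hb)
  have tgt_mem {b} (hb : b ∈ T.base) := h.mem_of_isPole _ (isPole_tgt hb)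
  have src_nbr : T.src (T.nxt (T.nxt d)) = w := T.src_nxt _
  refine ⟨fun x hx ↦ Finset.mem_insert_of_mem (h.mem_of_isPole x hx), ?_, fun b hb ↦ ?_,
    fun b hb b' hb' hne ↦ ?_, fun x hx ↦ ?_, fun x hx hx' ↦ ?_, fun x hx hx' ↦ ?_⟩
  · rw [Finset.coe_insert, Set.injOn_insert (by simpa using hw), y'_w]
    exact ⟨h.injOn.congr fun x hx ↦ (y'_eq hx).symm, by rwa [Set.image_congr fun x ↦ y'_eq]⟩
  · rw [Up, y'_eq (src_mem hb), y'_eq (tgt_mem hb)]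
    exact h.base_up b hb
  · rw [y'_eq (src_mem hb), y'_eq (tgt_mem hb), y'_eq (src_mem hb'), y'_eq (tgt_mem hb')]
    exact h.base_disjoint b hb b' hb' hne
  · rcases Finset.mem_insert.1 hx with rfl | hx
    · exact ⟨_, src_nbr, by simp [hs]⟩
    · obtain ⟨e, he, he'⟩ := h.exists_nbr x hx
      exact ⟨e, he, Finset.mem_insert_of_mem he'⟩
  · rcases Finset.mem_insert.1 hx with rfl | hx
    · rcases hc with ⟨_, hc⟩ | ⟨_, hc⟩
      · exact ⟨T.rev (T.nxt d), hw_def.symm, by simp [ht], by simpa [Up, ← hw_def, y'_w, y'_eq ht]⟩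
      · exact ⟨_, src_nbr, by simp [hs], by simpa [Up, ← hw_def, y'_w, y'_eq hs]⟩
    · obtain ⟨e, rfl, he, hup⟩ := h.exists_up x hx hx'
      exact ⟨e, rfl, Finset.mem_insert_of_mem he, by rwa [Up, y'_eq he, y'_eq hx]⟩
  · rcases Finset.mem_insert.1 hx with rfl | hx
    · rcases hc with ⟨hc, _⟩ | ⟨hc, _⟩
      · exact ⟨_, src_nbr, by simp [hs], by simpa [Up, ← hw_def, y'_w, y'_eq hs]⟩
      · exact ⟨T.rev (T.nxt d), hw_def.symm, by simp [ht], by simpa [Up, ← hw_def, y'_w, y'_eq ht]⟩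
    · obtain ⟨e, rfl, he, hup⟩ := h.exists_down x hx hx'
      refine ⟨e, rfl, Finset.mem_insert_of_mem he, ?_⟩
      rw [Up, src_rev, tgt_rev] at hup ⊢
      rwa [y'_eq he, y'_eq hx]

variable (T) in
theorem exists_bipolar : ∃ y : X → ℝ, T.Bipolar y := by
  classical
  obtain ⟨S, ⟨y, hy⟩, hmax⟩ := ({S : Finset X | ∃ y, T.BipolarOn S y}.toFinite).exists_maximal
    T.exists_bipolarOn_poles
  by_cases hS : S = Finset.univ
  · subst hS
    exact ⟨y, hy⟩
  · obtain ⟨d, hs, ht, hw⟩ := hy.exists_open_triangle hS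
    obtain ⟨c, hcS, hc⟩ := hy.exists_between hs ht
    exact absurd (hmax ⟨_, hy.insert hs ht hw hcS hc⟩ (Finset.subset_insert _ _)
      (Finset.mem_insert_self _ _)) hw

end SphereTriangulation

namespace SphereTriangulation

variable {D X : Type*} [Fintype D] [Fintype X] {T : SphereTriangulation D X} {y : X → ℝ}

variable (T) in
/-- The head of `d` is the middle vertex, in height, of the triangle on the left of `d`, and this
triangle lies to the left of its longest edge. -/
def Asc (y : X → ℝ) (d : D) : Prop := T.Up y d ∧ T.Up y (T.nxt d)

variable (T) in
/-- The head of `d` is the middle vertex, in height, of the triangle on the left of `d`, and this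
triangle lies to the right of its longest edge. -/
def Desc (y : X → ℝ) (d : D) : Prop := ¬ T.Up y d ∧ ¬ T.Up y (T.nxt d)

theorem Asc.not_desc {d : D} (h : T.Asc y d) : ¬ T.Desc y d := fun h' ↦ h'.1 h.1

variable (T) in
theorem not_up_three (y : X → ℝ) (d : D) :
    ¬ (T.Up y d ∧ T.Up y (T.nxt d) ∧ T.Up y (T.nxt (T.nxt d))) := by
  simp only [Up, src_nxt, tgt_nxt_nxt]
  exact fun ⟨h₁, h₂, h₃⟩ ↦ ((h₁.trans h₂).trans h₃).false

theorem up_rev_of_injective (hy : Function.Injective y) (d : D) :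
    T.Up y (T.rev d) ↔ ¬ T.Up y d := by
  rw [Up, Up, src_rev, tgt_rev, not_lt]
  exact ⟨le_of_lt, fun hle ↦ hle.lt_of_ne (hy.ne (T.tgt_ne_src d))⟩

namespace BipolarOn

variable (h : T.Bipolar y)

include h

theorem injective : Function.Injective y := Set.injOn_univ.1 (by simpa using h.injOn)

theorem up_rev (d : D) : T.Up y (T.rev d) ↔ ¬ T.Up y d := up_rev_of_injective h.injective d

theorem not_up (d : D) : ¬ T.Up y d ↔ y (T.tgt d) < y (T.src d) := by
  rw [← h.up_rev, Up, src_rev, tgt_rev]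

theorem up_of_not_up (d : D) (h₁ : ¬ T.Up y d) (h₂ : ¬ T.Up y (T.nxt d)) :
    T.Up y (T.nxt (T.nxt d)) := by
  by_contra h₃
  simp only [h.not_up, src_nxt, tgt_nxt_nxt] at h₁ h₂ h₃
  exact ((h₁.trans h₃).trans h₂).false

theorem three_mul_card_middle :
    3 * Nat.card {d // T.Asc y d ∨ T.Desc y d} = Fintype.card D := by
  classical
  rw [Nat.card_eq_fintype_card, Fintype.card_subtype, Finset.card_filter]
  let isMid : D → ℕ := fun d ↦ if T.Asc y d ∨ T.Desc y d then 1 else 0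
  have sum_nxt (f : D → ℕ) : ∑ d, f (T.nxt d) = ∑ d, f d := T.nxt_bijective.sum_comp f
  have one_mid (d : D) : isMid d + isMid (T.nxt d) + isMid (T.nxt (T.nxt d)) = 1 := by
    have h₁ := T.not_up_three y d
    have h₂ := h.up_of_not_up d
    simp only [isMid, Asc, Desc, nxt_nxt_nxt]
    by_cases a : T.Up y d <;> by_cases b : T.Up y (T.nxt d) <;>
      by_cases c : T.Up y (T.nxt (T.nxt d)) <;> simp_all
  calc 3 * ∑ d, isMid d
      = ∑ d, (isMid d + isMid (T.nxt d) + isMid (T.nxt (T.nxt d))) := by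
        rw [Finset.sum_add_distrib, Finset.sum_add_distrib, sum_nxt,
          sum_nxt fun d ↦ isMid (T.nxt d), sum_nxt]
        lia
    _ = Fintype.card D := by simp [one_mid]

theorem exists_asc {x : X} (hx : ¬ T.IsPole x) : ∃ d, T.Asc y d ∧ T.tgt d = x := by
  obtain ⟨e, rfl, -, he⟩ := h.exists_up x (Finset.mem_univ _) hx
  obtain ⟨f, hfe, -, hf⟩ := h.exists_down _ (Finset.mem_univ _) hx
  rw [h.up_rev] at hf
  by_contra! hcon
  refine (T.rotation_induction (fun d ↦ T.src d = T.src e ∧ ¬ T.Up y d) ?_ f e hfe ⟨hfe, hf⟩).2 he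
  rintro d ⟨hd, hdn⟩
  exact ⟨by simpa, fun hu ↦ hcon (T.rev d) ⟨(h.up_rev d).2 hdn, hu⟩ (by simpa)⟩

theorem exists_desc {x : X} (hx : ¬ T.IsPole x) : ∃ d, T.Desc y d ∧ T.tgt d = x := by
  obtain ⟨e, rfl, -, he⟩ := h.exists_up x (Finset.mem_univ _) hx
  obtain ⟨f, hfe, -, hf⟩ := h.exists_down _ (Finset.mem_univ _) hx
  rw [h.up_rev] at hf
  by_contra! hcon
  refine hf (T.rotation_induction (fun d ↦ T.src d = T.src e ∧ T.Up y d) ?_ e f hfe.symm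
    ⟨rfl, he⟩).2
  rintro d ⟨hd, hdu⟩
  refine ⟨by simpa, by_contra fun hn ↦ hcon (T.rev d) ⟨?_, hn⟩ (by simpa)⟩
  rwa [h.up_rev, not_not]

/- A vertex other than a pole is the middle of at least one triangle on either side, and Euler's
formula says that there are no further triangles. -/
theorem exists_middle_bijection :
    ∃ f : {x // ¬ T.IsPole x} × Bool → {d // T.Asc y d ∨ T.Desc y d}, Function.Bijective f ∧
      ∀ p, T.tgt (f p) = p.1 ∧ (T.Asc y (f p) ↔ p.2) := by
  classical
  choose asc asc_mid tgt_asc using fun x : {x // ¬ T.IsPole x} ↦ h.exists_asc x.2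
  choose desc desc_mid tgt_desc using fun x : {x // ¬ T.IsPole x} ↦ h.exists_desc x.2
  let f : {x // ¬ T.IsPole x} × Bool → {d // T.Asc y d ∨ T.Desc y d} := fun p ↦
    if p.2 then ⟨asc p.1, .inl (asc_mid _)⟩ else ⟨desc p.1, .inr (desc_mid _)⟩
  have hf (p) : T.tgt (f p) = p.1 ∧ (T.Asc y (f p) ↔ p.2) := by
    obtain ⟨x, _ | _⟩ := p
    · simpa [f, tgt_desc] using fun ha : T.Asc y (desc x) ↦ ha.not_desc (desc_mid x)
    · simpa [f, tgt_asc] using asc_mid x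
  refine ⟨f, Function.Injective.bijective_of_nat_card_le ?_ ?_, hf⟩
  · rintro ⟨x, i⟩ ⟨x', j⟩ hff
    have hx : x = x' := Subtype.ext (by rw [← (hf (x, i)).1, hff, (hf (x', j)).1])
    have hij : i = j := Bool.eq_iff_iff.2 (by rw [← (hf (x, i)).2, hff, (hf (x', j)).2])
    rw [hx, hij]
  · have card_pole : Nat.card {x // T.IsPole x} = T.base.card * 2 := by
      rw [show Nat.card {x // T.IsPole x} = _ from
        (Nat.card_congr (Equiv.ofInjective _ T.pole_injective)).symm, Nat.card_prod]
      simp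
    have card_nonpole : Fintype.card {x // ¬ T.IsPole x} + T.base.card * 2 = Fintype.card X := by
      rw [← card_pole, Nat.card_eq_fintype_card, Fintype.card_subtype_compl]
      exact Nat.sub_add_cancel (Fintype.card_subtype_le _)
    have := T.euler
    have := h.three_mul_card_middle
    rw [Nat.card_prod, Nat.card_eq_fintype_card (α := {x // ¬ T.IsPole x}),
      Nat.card_eq_fintype_card (α := Bool), Fintype.card_bool]
    lia

theorem not_isPole_tgt {d : D} (hd : T.Asc y d ∨ T.Desc y d) : ¬ T.IsPole (T.tgt d) := by
  obtain ⟨f, hf, hf'⟩ := h.exists_middle_bijection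
  obtain ⟨p, hp⟩ := hf.2 ⟨d, hd⟩
  have := (hf' p).1
  rw [hp] at this
  exact this ▸ p.1.2

theorem eq_of_tgt_eq {d d' : D} (hd : T.Asc y d ∨ T.Desc y d) (hd' : T.Asc y d' ∨ T.Desc y d')
    (hdd' : T.Asc y d ↔ T.Asc y d') (htgt : T.tgt d = T.tgt d') : d = d' := by
  obtain ⟨f, hf, hf'⟩ := h.exists_middle_bijection
  obtain ⟨p, hp⟩ := hf.2 ⟨d, hd⟩
  obtain ⟨p', hp'⟩ := hf.2 ⟨d', hd'⟩
  obtain ⟨hpx, hpi⟩ := hf' p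
  obtain ⟨hpx', hpi'⟩ := hf' p'
  rw [hp] at hpx hpi
  rw [hp'] at hpx' hpi'
  have : p = p' := Prod.ext (Subtype.ext (by rw [← hpx, ← hpx', htgt]))
    (Bool.eq_iff_iff.2 (by rw [← hpi, ← hpi', hdd']))
  exact congrArg Subtype.val (hp.symm.trans (this ▸ hp'))

theorem tgt_injOn_asc : Set.InjOn T.tgt {d | T.Asc y d} := fun _ hd _ hd' ↦
  h.eq_of_tgt_eq (.inl hd) (.inl hd') (iff_of_true hd hd')

theorem tgt_injOn_desc : Set.InjOn T.tgt {d | T.Desc y d} := fun _ hd _ hd' ↦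
  h.eq_of_tgt_eq (.inr hd) (.inr hd')
    (iff_of_false (fun ha ↦ ha.not_desc hd) fun ha ↦ ha.not_desc hd')

theorem up_of_src_eq_base {b d : D} (hb : b ∈ T.base) (hd : T.src d = T.src b) : T.Up y d := by
  refine (T.rotation_induction (fun e ↦ T.src e = T.src b ∧ T.Up y e) ?_ b d hd.symm
    ⟨rfl, h.base_up b hb⟩).2
  rintro e ⟨he, heu⟩
  refine ⟨by simpa, by_contra fun hn ↦ h.not_isPole_tgt (d := T.rev e) (.inr ⟨?_, hn⟩) ?_⟩
  · rwa [h.up_rev, not_not]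
  · simpa [he] using isPole_src hb

theorem up_of_tgt_eq_base {b d : D} (hb : b ∈ T.base) (hd : T.tgt d = T.tgt b) : T.Up y d := by
  suffices ¬ T.Up y (T.rev d) by rwa [h.up_rev, not_not] at this
  refine (T.rotation_induction (fun e ↦ T.src e = T.tgt b ∧ ¬ T.Up y e) ?_ (T.rev b) (T.rev d)
    (by simp [hd]) ⟨rfl, fun hu ↦ (h.up_rev b).1 hu (h.base_up b hb)⟩).2
  rintro e ⟨he, hen⟩
  refine ⟨by simpa, fun hu ↦ h.not_isPole_tgt (d := T.rev e) (.inl ⟨(h.up_rev e).2 hen, hu⟩) ?_⟩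
  simpa [he] using isPole_tgt hb

end BipolarOn

/-! ### Sweeping the sphere -/

variable (T) in
/-- A front for the height function `y`: darts `P` going up between consecutive vertices of `V`, the
whole forming a disjoint union of vertical paths, each from the source to the target of a base
dart. -/
structure IsFront (y : X → ℝ) (P : Set D) (V : Set X) : Prop where
  up : ∀ d ∈ P, T.Up y d
  src_mem : ∀ d ∈ P, T.src d ∈ V
  tgt_mem : ∀ d ∈ P, T.tgt d ∈ V
  exists_above : ∀ w ∈ V, (∃ d ∈ P, T.src d = w) ∨ ∃ b ∈ T.base, T.tgt b = w
  exists_below : ∀ w ∈ V, (∃ d ∈ P, T.tgt d = w) ∨ ∃ b ∈ T.base, T.src b = w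
  disjoint : ∀ d ∈ P, ∀ d' ∈ P, d ≠ d' → y (T.tgt d) ≤ y (T.src d') ∨ y (T.tgt d') ≤ y (T.src d)

namespace IsFront

variable {P : Set D} {V : Set X}

theorem not_between (hF : T.IsFront y P V) {d : D} (hd : d ∈ P) {w : X} (hw : w ∈ V) :
    ¬ (y (T.src d) < y w ∧ y w < y (T.tgt d)) := by
  rintro ⟨h₁, h₂⟩
  have not_src (d') (hd' : d' ∈ P) : T.src d' ≠ w := by
    rintro rfl
    have hup : y (T.src d') < y (T.tgt d') := hF.up d' hd'
    rcases hF.disjoint d hd d' hd' (by rintro rfl; exact h₁.false) with h | h <;> linarith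
  have not_tgt (d') (hd' : d' ∈ P) : T.tgt d' ≠ w := by
    rintro rfl
    have hup : y (T.src d') < y (T.tgt d') := hF.up d' hd'
    rcases hF.disjoint d hd d' hd' (by rintro rfl; exact h₂.false) with h | h <;> linarith
  rcases hF.exists_above w hw with ⟨d', hd', h⟩ | ⟨b, hb, rfl⟩
  · exact not_src d' hd' h
  rcases hF.exists_below _ hw with ⟨d', hd', h⟩ | ⟨b', hb', h⟩
  · exact not_tgt d' hd' h
  · exact T.base_src_ne_tgt b' hb' b hb h

theorem eq_of_src_eq (hF : T.IsFront y P V) {d d' : D} (hd : d ∈ P) (hd' : d' ∈ P)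
    (h : T.src d = T.src d') : d = d' := by
  by_contra hne
  have h₁ : y (T.src d) < y (T.tgt d) := hF.up d hd
  have h₂ : y (T.src d') < y (T.tgt d') := hF.up d' hd'
  rcases hF.disjoint d hd d' hd' hne with hle | hle <;> rw [h] at * <;> linarith

theorem eq_of_tgt_eq (hF : T.IsFront y P V) {d d' : D} (hd : d ∈ P) (hd' : d' ∈ P)
    (h : T.tgt d = T.tgt d') : d = d' := by
  by_contra hne
  have h₁ : y (T.src d) < y (T.tgt d) := hF.up d hd
  have h₂ : y (T.src d') < y (T.tgt d') := hF.up d' hd'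
  rcases hF.disjoint d hd d' hd' hne with hle | hle <;> rw [h] at * <;> linarith

theorem split (hF : T.IsFront y P V) {e d₁ d₂ : D} (he : e ∈ P) (hup₁ : T.Up y d₁)
    (hup₂ : T.Up y d₂) (hsrc : T.src d₁ = T.src e) (hmid : T.src d₂ = T.tgt d₁)
    (htgt : T.tgt d₂ = T.tgt e) :
    T.IsFront y (P \ {e} ∪ {d₁, d₂}) (insert (T.tgt d₁) V) := by
  have hup₁' : y (T.src e) < y (T.tgt d₁) := hsrc ▸ hup₁
  have hup₂' : y (T.tgt d₁) < y (T.tgt e) := by rw [← hmid, ← htgt]; exact hup₂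
  have disj (d) (hd : d ∈ P \ {e}) := hF.disjoint d hd.1 e he hd.2
  refine ⟨?_, ?_, ?_, ?_, ?_, ?_⟩
  · rintro d (hd | rfl | rfl)
    exacts [hF.up d hd.1, hup₁, hup₂]
  · rintro d (hd | rfl | rfl)
    exacts [.inr (hF.src_mem d hd.1), .inr (hsrc ▸ hF.src_mem e he), .inl hmid]
  · rintro d (hd | rfl | rfl)
    exacts [.inr (hF.tgt_mem d hd.1), .inl rfl, .inr (htgt ▸ hF.tgt_mem e he)]
  · rintro w (rfl | hw)
    · exact .inl ⟨d₂, by simp, hmid⟩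
    · refine (hF.exists_above w hw).imp_left ?_
      rintro ⟨d, hd, rfl⟩
      by_cases hde : d = e
      · exact ⟨d₁, by simp, by rw [hsrc, hde]⟩
      · exact ⟨d, .inl ⟨hd, hde⟩, rfl⟩
  · rintro w (rfl | hw)
    · exact .inl ⟨d₁, by simp, rfl⟩
    · refine (hF.exists_below w hw).imp_left ?_
      rintro ⟨d, hd, rfl⟩
      by_cases hde : d = e
      · exact ⟨d₂, by simp, by rw [htgt, hde]⟩
      · exact ⟨d, .inl ⟨hd, hde⟩, rfl⟩
  · have disj₁ (d) (hd : d ∈ P \ {e}) : y (T.tgt d) ≤ y (T.src d₁) ∨ y (T.tgt d₁) ≤ y (T.src d) :=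
      (disj d hd).imp (fun h ↦ hsrc ▸ h) fun h ↦ hup₂'.le.trans h
    have disj₂ (d) (hd : d ∈ P \ {e}) : y (T.tgt d) ≤ y (T.src d₂) ∨ y (T.tgt d₂) ≤ y (T.src d) :=
      (disj d hd).imp (fun h ↦ hmid ▸ h.trans hup₁'.le) fun h ↦ htgt ▸ h
    rintro d (hd | rfl | rfl) d' (hd' | rfl | rfl) hne
    exacts [hF.disjoint d hd.1 d' hd'.1 hne, disj₁ d hd, disj₂ d hd, (disj₁ d' hd').symm,
      (hne rfl).elim, .inl (congrArg y hmid).ge, (disj₂ d' hd').symm, .inr (congrArg y hmid).ge,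
      (hne rfl).elim]

theorem merge (hF : T.IsFront y P V) {d₁ d₂ g : D} (hd₁ : d₁ ∈ P) (hd₂ : d₂ ∈ P)
    (hsrc : T.src g = T.src d₁) (hmid : T.src d₂ = T.tgt d₁) (htgt : T.tgt g = T.tgt d₂) :
    T.IsFront y (P \ {d₁, d₂} ∪ {g}) (V \ {T.tgt d₁}) := by
  have hup₁ : y (T.src d₁) < y (T.tgt d₁) := hF.up d₁ hd₁
  have hup₂ : y (T.tgt d₁) < y (T.tgt d₂) := hmid ▸ hF.up d₂ hd₂
  refine ⟨?_, ?_, ?_, ?_, ?_, ?_⟩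
  · rintro d (hd | rfl)
    · exact hF.up d hd.1
    · rw [Up, hsrc, htgt]
      exact hup₁.trans hup₂
  · rintro d (⟨hd, hd'⟩ | rfl)
    · refine ⟨hF.src_mem d hd, fun h ↦ hd' (.inr (hF.eq_of_src_eq hd hd₂ (h.trans hmid.symm)))⟩
    · exact hsrc ▸ ⟨hF.src_mem _ hd₁, fun h ↦ hup₁.ne (congrArg y h)⟩
  · rintro d (⟨hd, hd'⟩ | rfl)
    · exact ⟨hF.tgt_mem d hd, fun h ↦ hd' (.inl (hF.eq_of_tgt_eq hd hd₁ h))⟩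
    · exact htgt ▸ ⟨hF.tgt_mem _ hd₂, fun h ↦ hup₂.ne' (congrArg y h)⟩
  · rintro w ⟨hw, hw'⟩
    refine (hF.exists_above w hw).imp_left ?_
    rintro ⟨d, hd, rfl⟩
    by_cases h : d = d₁
    · exact ⟨g, .inr rfl, by rw [hsrc, h]⟩
    · exact ⟨d, .inl ⟨hd, by rintro (rfl | rfl); exacts [h rfl, hw' hmid]⟩, rfl⟩
  · rintro w ⟨hw, hw'⟩
    refine (hF.exists_below w hw).imp_left ?_
    rintro ⟨d, hd, rfl⟩
    by_cases h : d = d₂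
    · exact ⟨g, .inr rfl, by rw [htgt, h]⟩
    · exact ⟨d, .inl ⟨hd, by rintro (rfl | rfl); exacts [hw' rfl, h rfl]⟩, rfl⟩
  · have disj (d) (hd : d ∈ P \ {d₁, d₂}) :
        y (T.tgt d) ≤ y (T.src g) ∨ y (T.tgt g) ≤ y (T.src d) := by
      have hup : y (T.src d) < y (T.tgt d) := hF.up d hd.1
      have h₁ := hF.disjoint d hd.1 d₁ hd₁ fun h ↦ hd.2 (.inl h)
      have h₂ := hF.disjoint d hd.1 d₂ hd₂ fun h ↦ hd.2 (.inr h)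
      rw [hmid] at h₂
      rw [hsrc, htgt]
      grind
    rintro d (hd | rfl) d' (hd' | rfl) hne
    exacts [hF.disjoint d hd.1 d' hd'.1 hne, disj d hd, (disj d' hd').symm, (hne rfl).elim]

theorem erase_base (hF : T.IsFront y P V) (h : T.Bipolar y) {g : D} (hg : g ∈ P)
    (hgb : g ∈ T.base) : T.IsFront y (P \ {g}) (V \ {T.src g, T.tgt g}) := by
  refine ⟨fun d hd ↦ hF.up d hd.1, ?_, ?_, ?_, ?_,
    fun d hd d' hd' ↦ hF.disjoint d hd.1 d' hd'.1⟩
  · rintro d ⟨hd, hne⟩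
    refine ⟨hF.src_mem d hd, ?_⟩
    rintro (hs | hs)
    · exact hne (hF.eq_of_src_eq hd hg hs)
    · exact (h.up_rev d).1 (h.up_of_tgt_eq_base hgb (by simpa using hs)) (hF.up d hd)
  · rintro d ⟨hd, hne⟩
    refine ⟨hF.tgt_mem d hd, ?_⟩
    rintro (hs | hs)
    · exact (h.up_rev d).1 (h.up_of_src_eq_base hgb (by simpa using hs)) (hF.up d hd)
    · exact hne (hF.eq_of_tgt_eq hd hg hs)
  · rintro w ⟨hw, hw'⟩
    refine (hF.exists_above w hw).imp_left ?_
    rintro ⟨d, hd, rfl⟩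
    exact ⟨d, ⟨hd, fun hdg ↦ hw' (.inl (congrArg T.src hdg))⟩, rfl⟩
  · rintro w ⟨hw, hw'⟩
    refine (hF.exists_below w hw).imp_left ?_
    rintro ⟨d, hd, rfl⟩
    exact ⟨d, ⟨hd, fun hdg ↦ hw' (.inr (congrArg T.tgt hdg))⟩, rfl⟩

end IsFront

variable (T) in
/-- The three darts of the triangle on the left of `d`. -/
def triangle (d : D) : Set D := {d, T.nxt d, T.nxt (T.nxt d)}

theorem rev_notMem_triangle_self (d : D) : T.rev d ∉ T.triangle d := by
  rintro (h | h | h)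
  · exact T.tgt_ne_src d (congrArg T.src h)
  · exact T.tgt_ne_src (T.nxt (T.nxt d)) (by simpa using congrArg T.tgt h)
  · exact T.tgt_ne_src (T.nxt d) (by simpa using (congrArg T.src h).symm)

theorem triangle_nxt (d : D) : T.triangle (T.nxt d) = T.triangle d := by
  ext
  simp only [triangle, nxt_nxt_nxt, Set.mem_insert_iff, Set.mem_singleton_iff]
  tauto

theorem rev_notMem_triangle {d e : D} (hd : d ∈ T.triangle e) : T.rev d ∉ T.triangle e := by
  have := T.rev_notMem_triangle_self d
  rcases hd with rfl | rfl | rfl <;> simpa only [triangle_nxt] using this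

theorem nxt_mem_triangle {d e : D} (hd : d ∈ T.triangle e) : T.nxt d ∈ T.triangle e := by
  rcases hd with rfl | rfl | rfl <;> simp [triangle]

variable (T) in
/-- The darts on the front bounding the swept region `A`. -/
def frontDarts (y : X → ℝ) (A : Set D) : Set D :=
  {d | T.Up y d ∧ (d ∈ A ∨ d ∈ T.base) ∧ T.rev d ∉ A}

variable (T) in
/-- The vertices on the front bounding the swept region `A`. A vertex other than a pole is reached
with the triangle to its left of which it is the middle, and it is left behind with the one to its
right. -/
def frontVerts (y : X → ℝ) (A : Set D) : Set X :=
  {w | ((∃ d ∈ A, T.Asc y d ∧ T.tgt d = w) ∧ ∃ d ∉ A, T.Desc y d ∧ T.tgt d = w) ∨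
    ∃ b ∈ T.base, b ∉ A ∧ (T.src b = w ∨ T.tgt b = w)}

variable (T) in
/-- A stage of the sweep of the sphere from left to right: `A` is the set of darts of the swept
triangles. The sweep of a component starts on the right of its base dart and ends on the left. -/
structure IsSwept (y : X → ℝ) (A : Set D) : Prop where
  nxt_mem : ∀ d ∈ A, T.nxt d ∈ A
  mem_or_base : ∀ d, T.Up y d → T.rev d ∈ A → d ∈ A ∨ d ∈ T.base
  asc_mem : ∀ d d', T.Asc y d → T.Desc y d' → T.tgt d = T.tgt d' → d' ∈ A → d ∈ A
  isFront : T.IsFront y (T.frontDarts y A) (T.frontVerts y A)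

theorem isSwept_empty (h : T.Bipolar y) : T.IsSwept y ∅ := by
  have mem_frontDarts (d : D) : d ∈ T.frontDarts y ∅ ↔ d ∈ T.base := by
    simpa [frontDarts] using h.base_up d
  have mem_frontVerts (w : X) : w ∈ T.frontVerts y ∅ ↔ ∃ b ∈ T.base, T.src b = w ∨ T.tgt b = w := by
    simp [frontVerts]
  refine ⟨by simp, by simp, by simp, fun d hd ↦ hd.1, ?_, ?_, ?_, ?_, ?_⟩ <;>
    simp only [mem_frontDarts, mem_frontVerts]
  · exact fun b hb ↦ ⟨b, hb, .inl rfl⟩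
  · exact fun b hb ↦ ⟨b, hb, .inr rfl⟩
  · rintro w ⟨b, hb, hw | hw⟩
    exacts [.inl ⟨b, hb, hw⟩, .inr ⟨b, hb, hw⟩]
  · rintro w ⟨b, hb, hw | hw⟩
    exacts [.inr ⟨b, hb, hw⟩, .inl ⟨b, hb, hw⟩]
  · exact fun b hb b' hb' hne ↦ (h.base_disjoint b hb b' hb' hne).imp le_of_lt le_of_lt

namespace IsSwept

variable {A : Set D} (hA : T.IsSwept y A)

include hA

theorem disjoint_triangle {d : D} (hd : d ∉ A) : ∀ e ∈ T.triangle d, e ∉ A := by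
  rintro e (rfl | rfl | rfl) he
  · exact hd he
  · exact hd (by simpa using hA.nxt_mem _ (hA.nxt_mem _ he))
  · exact hd (by simpa using hA.nxt_mem _ he)

theorem nxt_mem_union (m : D) : ∀ d ∈ A ∪ T.triangle m, T.nxt d ∈ A ∪ T.triangle m :=
  fun _ hd ↦ hd.imp (hA.nxt_mem _) nxt_mem_triangle

theorem mem_or_base_union (h : T.Bipolar y) {m : D}
    (hm : ∀ e ∈ T.triangle m, ¬ T.Up y e → T.rev e ∈ T.frontDarts y A) :
    ∀ d, T.Up y d → T.rev d ∈ A ∪ T.triangle m → d ∈ A ∪ T.triangle m ∨ d ∈ T.base := by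
  rintro d hd (hr | hr)
  · exact (hA.mem_or_base d hd hr).imp_left .inl
  · have := (hm _ hr fun hu ↦ (h.up_rev d).1 hu hd).2.1
    rw [rev_rev] at this
    exact this.imp_left .inl

theorem mem_frontDarts_union {m : D} (hm : m ∉ A) (d : D) :
    d ∈ T.frontDarts y (A ∪ T.triangle m) ↔
      d ∈ T.frontDarts y A ∧ T.rev d ∉ T.triangle m ∨
        T.Up y d ∧ d ∈ T.triangle m ∧ d ∉ T.base := by
  have h₁ := hA.mem_or_base d
  have h₂ := hA.disjoint_triangle hm d
  have h₃ := rev_notMem_triangle (T := T) (d := d) (e := m)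
  simp only [frontDarts, Set.mem_ofPred_eq, Set.mem_union]
  tauto

theorem frontDarts_union_of_asc (h : T.Bipolar y) {m : D} (hm : T.Asc y m) (hmA : m ∉ A) :
    T.frontDarts y (A ∪ T.triangle m) =
      T.frontDarts y A \ {T.rev (T.nxt (T.nxt m))} ∪ {m, T.nxt m} := by
  have nonpole := h.not_isPole_tgt (.inl hm)
  have base₁ : m ∉ T.base := fun hb ↦ nonpole (isPole_tgt hb)
  have base₂ : T.nxt m ∉ T.base := fun hb ↦ nonpole (by simpa using isPole_src hb)
  have up₃ : ¬ T.Up y (T.nxt (T.nxt m)) := fun hu ↦ T.not_up_three y m ⟨hm.1, hm.2, hu⟩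
  ext d
  rw [hA.mem_frontDarts_union hmA]
  have up_rev := h.up_rev d
  have eq_rev : d = T.rev (T.nxt (T.nxt m)) ↔ T.rev d = T.nxt (T.nxt m) := by
    rw [← T.rev_injective.eq_iff, rev_rev]
  simp only [triangle, Set.mem_insert_iff, Set.mem_singleton_iff, Set.mem_union, Set.mem_sdiff,
    eq_rev]
  obtain ⟨hm₁, hm₂⟩ := hm
  grind [frontDarts]

end IsSwept

theorem Asc.of_mem_triangle (h : T.Bipolar y) {m e : D} (hm : T.Asc y m) (he : e ∈ T.triangle m) :
    (T.Asc y e → e = m) ∧ ¬ T.Desc y e ∧ e ∉ T.base := by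
  have not_up : ¬ T.Up y (T.nxt (T.nxt m)) := fun hu ↦ T.not_up_three y m ⟨hm.1, hm.2, hu⟩
  have nonpole := h.not_isPole_tgt (.inl hm)
  rcases he with rfl | rfl | rfl
  · exact ⟨fun _ ↦ rfl, hm.not_desc, fun hb ↦ nonpole (isPole_tgt hb)⟩
  · exact ⟨fun ha ↦ (not_up ha.2).elim, fun hd ↦ hd.1 hm.2,
      fun hb ↦ nonpole (by simpa using isPole_src hb)⟩
  · exact ⟨fun ha ↦ (not_up ha.1).elim, fun hd ↦ hd.2 (by simpa using hm.1),
      fun hb ↦ not_up (h.base_up _ hb)⟩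

theorem Desc.of_mem_triangle (h : T.Bipolar y) {m e : D} (hm : T.Desc y m)
    (he : e ∈ T.triangle m) :
    ¬ T.Asc y e ∧ (T.Desc y e → e = m) ∧ (T.Up y e ↔ e = T.nxt (T.nxt m)) := by
  have up := h.up_of_not_up m hm.1 hm.2
  have ne₁ : m ≠ T.nxt (T.nxt m) := fun heq ↦ hm.1 (heq ▸ up)
  have ne₂ : T.nxt m ≠ T.nxt (T.nxt m) := fun heq ↦ hm.2 (heq ▸ up)
  rcases he with rfl | rfl | rfl
  · exact ⟨fun ha ↦ hm.1 ha.1, fun _ ↦ rfl, iff_of_false hm.1 ne₁⟩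
  · exact ⟨fun ha ↦ hm.2 ha.1, fun hd ↦ (hd.2 up).elim, iff_of_false hm.2 ne₂⟩
  · exact ⟨fun ha ↦ hm.1 (by simpa using ha.2), fun hd ↦ (hd.1 up).elim, iff_of_true up rfl⟩

theorem eq_of_isPole {b b' : D} (hb : b ∈ T.base) (hb' : b' ∈ T.base) {w : X}
    (hw : T.src b = w ∨ T.tgt b = w) (hw' : T.src b' = w ∨ T.tgt b' = w) : b = b' := by
  rcases hw with rfl | rfl <;> rcases hw' with h | h
  exacts [T.base_src_injOn hb hb' h.symm, (T.base_src_ne_tgt b hb b' hb' h.symm).elim,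
    (T.base_src_ne_tgt b' hb' b hb h).elim, T.base_tgt_injOn hb hb' h.symm]

theorem mem_frontVerts_union_of_desc (h : T.Bipolar y) {A : Set D} {m : D} (hm : T.Desc y m)
    (w : X) :
    w ∈ T.frontVerts y (A ∪ T.triangle m) ↔ w ∈ T.frontVerts y A ∧ w ≠ T.tgt m ∧
      (T.nxt (T.nxt m) ∈ T.base → T.src (T.nxt (T.nxt m)) ≠ w ∧ T.tgt (T.nxt (T.nxt m)) ≠ w) := by
  have tri (e) (he : e ∈ T.triangle m) := hm.of_mem_triangle h he
  have not_pole := h.not_isPole_tgt (.inr hm)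
  have hg : T.nxt (T.nxt m) ∈ T.triangle m := by simp [triangle]
  constructor
  · rintro (⟨⟨d, hd | hd, hda, rfl⟩, d', hd', hdd', htgt⟩ | ⟨b, hb, hbA, hw⟩)
    · refine ⟨.inl ⟨⟨d, hd, hda, rfl⟩, d', fun hA' ↦ hd' (.inl hA'), hdd', htgt⟩, ?_, ?_⟩
      · exact fun heq ↦ hd' (.inr (.inl (h.tgt_injOn_desc hdd' hm (htgt.trans heq))))
      · have := h.not_isPole_tgt (.inl hda)
        exact fun hgb ↦
          ⟨fun heq ↦ this (heq ▸ isPole_src hgb), fun heq ↦ this (heq ▸ isPole_tgt hgb)⟩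
    · exact ((tri d hd).1 hda).elim
    · refine ⟨.inr ⟨b, hb, fun hA' ↦ hbA (.inl hA'), hw⟩, ?_, fun hgb ↦ not_or.1 fun hw' ↦ ?_⟩
      · rintro rfl
        exact not_pole (hw.elim (· ▸ isPole_src hb) (· ▸ isPole_tgt hb))
      · exact hbA (.inr (eq_of_isPole hb hgb hw hw' ▸ hg))
  · rintro ⟨⟨⟨d, hd, hda, rfl⟩, d', hd', hdd', htgt⟩ | ⟨b, hb, hbA, hw⟩, hne, hbase⟩
    · refine .inl ⟨⟨d, .inl hd, hda, rfl⟩, d', not_or.2 ⟨hd', fun ht ↦ hne ?_⟩, hdd', htgt⟩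
      rw [← htgt, (tri d' ht).2.1 hdd']
    · refine .inr ⟨b, hb, not_or.2 ⟨hbA, fun ht ↦ ?_⟩, hw⟩
      obtain rfl := (tri b ht).2.2.1 (h.base_up b hb)
      exact (not_or.2 (hbase hb)) hw

namespace IsSwept

variable {A : Set D} (hA : T.IsSwept y A)

include hA

theorem frontVerts_union_of_asc (h : T.Bipolar y) {m : D} (hm : T.Asc y m) (hmA : m ∉ A) :
    T.frontVerts y (A ∪ T.triangle m) = insert (T.tgt m) (T.frontVerts y A) := by
  obtain ⟨m', hm', hmm'⟩ := h.exists_desc (h.not_isPole_tgt (.inl hm))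
  have tri (e) (he : e ∈ T.triangle m) := hm.of_mem_triangle h he
  have hmA' : m' ∉ A := fun hA' ↦ hmA (hA.asc_mem m m' hm hm' hmm'.symm hA')
  ext w
  constructor
  · rintro (⟨⟨d, hd | hd, hda, rfl⟩, d', hd', hdd', htgt⟩ | ⟨b, hb, hbA, hw⟩)
    · exact .inr (.inl ⟨⟨d, hd, hda, rfl⟩, d', fun hA' ↦ hd' (.inl hA'), hdd', htgt⟩)
    · exact .inl (congrArg T.tgt ((tri d hd).1 hda))
    · exact .inr (.inr ⟨b, hb, fun hA' ↦ hbA (.inl hA'), hw⟩)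
  · rintro (rfl | ⟨⟨d, hd, hda, rfl⟩, d', hd', hdd', htgt⟩ | ⟨b, hb, hbA, hw⟩)
    · exact .inl ⟨⟨m, .inr (.inl rfl), hm, rfl⟩, m',
        not_or.2 ⟨hmA', fun ht ↦ (tri m' ht).2.1 hm'⟩, hm', hmm'⟩
    · exact .inl ⟨⟨d, .inl hd, hda, rfl⟩, d',
        not_or.2 ⟨hd', fun ht ↦ (tri d' ht).2.1 hdd'⟩, hdd', htgt⟩
    · exact .inr ⟨b, hb, not_or.2 ⟨hbA, fun ht ↦ (tri b ht).2.2 hb⟩, hw⟩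

theorem union_of_asc (h : T.Bipolar y) {m : D} (hm : T.Asc y m) (hmA : m ∉ A)
    (hfront : T.rev (T.nxt (T.nxt m)) ∈ T.frontDarts y A) : T.IsSwept y (A ∪ T.triangle m) := by
  have tri (e) (he : e ∈ T.triangle m) := hm.of_mem_triangle h he
  refine ⟨hA.nxt_mem_union m, hA.mem_or_base_union h ?_, ?_, ?_⟩
  · rintro e (rfl | rfl | rfl) he
    exacts [(he hm.1).elim, (he hm.2).elim, hfront]
  · rintro d d' hd hd' htgt (hdA | hdt)
    · exact .inl (hA.asc_mem d d' hd hd' htgt hdA)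
    · exact ((tri d' hdt).2.1 hd').elim
  · rw [hA.frontDarts_union_of_asc h hm hmA, hA.frontVerts_union_of_asc h hm hmA]
    exact hA.isFront.split hfront hm.1 hm.2 (by simp) (by simp) (by simp)

theorem frontDarts_union_of_desc (h : T.Bipolar y) {m : D} (hm : T.Desc y m) (hmA : m ∉ A) :
    T.frontDarts y (A ∪ T.triangle m) =
      T.frontDarts y A \ {T.rev (T.nxt m), T.rev m} ∪ ({T.nxt (T.nxt m)} \ T.base) := by
  have tri (e) (he : e ∈ T.triangle m) := (hm.of_mem_triangle h he).2.2
  have hg : T.nxt (T.nxt m) ∈ T.triangle m := by simp [triangle]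
  ext d
  have rev_mem (hd : T.Up y d) :
      T.rev d ∈ T.triangle m ↔ d = T.rev (T.nxt m) ∨ d = T.rev m := by
    constructor
    · rintro (hr | hr | hr)
      · exact .inr (by rw [← hr, rev_rev])
      · exact .inl (by rw [← hr, rev_rev])
      · exact ((h.up_rev d).1 ((tri _ (by simp [hr, triangle])).2 hr) hd).elim
    · rintro (rfl | rfl) <;> simp [triangle]
  rw [hA.mem_frontDarts_union hmA]
  constructor
  · rintro (⟨hd, hr⟩ | ⟨hu, ht, hb⟩)
    · exact .inl ⟨hd, fun hr' ↦ hr ((rev_mem hd.1).2 hr')⟩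
    · exact .inr ⟨(tri d ht).1 hu, hb⟩
  · rintro (⟨hd, hr⟩ | ⟨rfl, hb⟩)
    · exact .inl ⟨hd, fun hr' ↦ hr ((rev_mem hd.1).1 hr')⟩
    · exact .inr ⟨(tri _ hg).2 rfl, hg, hb⟩

theorem isFront_union_of_desc (h : T.Bipolar y) {m : D} (hm : T.Desc y m) (hmA : m ∉ A)
    (hfront₁ : T.rev m ∈ T.frontDarts y A) (hfront₂ : T.rev (T.nxt m) ∈ T.frontDarts y A) :
    T.IsFront y (T.frontDarts y (A ∪ T.triangle m)) (T.frontVerts y (A ∪ T.triangle m)) := by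
  set g := T.nxt (T.nxt m) with hg
  have hmerge := hA.isFront.merge (g := g) hfront₂ hfront₁ (by simp [hg]) (by simp) (by simp [hg])
  simp only [tgt_rev, src_nxt] at hmerge
  by_cases hgb : g ∈ T.base
  · have := hmerge.erase_base h (.inr rfl) hgb
    convert this using 1
    · rw [hA.frontDarts_union_of_desc h hm hmA]
      have : g ∉ T.frontDarts y A \ {T.rev (T.nxt m), T.rev m} := fun hgP ↦
        hgP.2 (.inl (hA.isFront.eq_of_src_eq hgP.1 hfront₂ (by simp [hg])))
      grind
    · ext w
      rw [mem_frontVerts_union_of_desc h hm]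
      grind
  · convert hmerge using 1
    · rw [hA.frontDarts_union_of_desc h hm hmA]
      grind
    · ext w
      rw [mem_frontVerts_union_of_desc h hm]
      grind

theorem union_of_desc (h : T.Bipolar y) {m : D} (hm : T.Desc y m) (hmA : m ∉ A)
    (hfront₁ : T.rev m ∈ T.frontDarts y A) (hfront₂ : T.rev (T.nxt m) ∈ T.frontDarts y A) :
    T.IsSwept y (A ∪ T.triangle m) := by
  have tri (e) (he : e ∈ T.triangle m) := hm.of_mem_triangle h he
  refine ⟨hA.nxt_mem_union m, hA.mem_or_base_union h ?_, ?_,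
    hA.isFront_union_of_desc h hm hmA hfront₁ hfront₂⟩
  · rintro e he hu
    rcases he with rfl | rfl | rfl
    exacts [hfront₁, hfront₂, (hu ((tri _ (by simp [triangle])).2.2.2 rfl)).elim]
  · rintro d d' hd hd' htgt (hdA | hdt)
    · exact .inl (hA.asc_mem d d' hd hd' htgt hdA)
    · obtain rfl := (tri d' hdt).2.1 hd'
      have hw : T.tgt d' ∈ T.frontVerts y A := by simpa using hA.isFront.src_mem _ hfront₁
      rcases hw with ⟨⟨e, he, hea, het⟩, -⟩ | ⟨b, hb, -, hw⟩
      · rw [h.tgt_injOn_asc hd hea (htgt.trans het.symm)]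
        exact .inl he
      · exact (h.not_isPole_tgt (.inr hm) (hw.elim (· ▸ isPole_src hb) (· ▸ isPole_tgt hb))).elim

end IsSwept

theorem asc_or_desc_of_mem_frontDarts (h : T.Bipolar y) {A : Set D} {d : D}
    (hd : d ∈ T.frontDarts y A) :
    T.Asc y (T.nxt (T.rev d)) ∨ T.Desc y (T.rev d) ∨ T.Desc y (T.nxt (T.nxt (T.rev d))) := by
  have not_up : ¬ T.Up y (T.rev d) := fun hu ↦ (h.up_rev d).1 hu hd.1
  simp only [Asc, Desc, nxt_nxt_nxt]
  tauto

namespace IsSwept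

variable {A : Set D} (hA : T.IsSwept y A)

include hA

theorem frontDarts_nonempty (h : T.Bipolar y) (hne : A ≠ Set.univ) :
    (T.frontDarts y A).Nonempty := by
  by_contra! hempty
  have base_mem (b) (hb : b ∈ T.base) : b ∈ A := by
    by_contra hbA
    rcases hA.isFront.exists_above (T.src b) (.inr ⟨b, hb, hbA, .inl rfl⟩) with
      ⟨d, hd, -⟩ | ⟨b', hb', heq⟩
    · exact hempty.le hd
    · exact T.base_src_ne_tgt b hb b' hb' heq.symm
  have rev_mem (d) (hd : d ∈ A) : T.rev d ∈ A := by
    by_cases hu : T.Up y d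
    · by_contra hr
      exact hempty.le ⟨hu, .inl hd, hr⟩
    · exact (hA.mem_or_base _ ((h.up_rev d).2 hu) (by simpa)).elim id (base_mem _)
  exact hne (Set.eq_univ_of_forall (T.dart_induction (· ∈ A) hA.nxt_mem rev_mem base_mem))

theorem exists_desc_mem_frontDarts (h : T.Bipolar y) (hne : A ≠ Set.univ)
    (hno : ∀ d ∈ T.frontDarts y A, ¬ T.Asc y (T.nxt (T.rev d))) :
    ∃ m, T.Desc y m ∧ T.rev m ∈ T.frontDarts y A ∧ T.rev (T.nxt m) ∈ T.frontDarts y A := by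
  have fin (P : Set D) : P.Finite := P.toFinite
  have src_or_tgt (d) (hd : d ∈ T.frontDarts y A) :=
    (asc_or_desc_of_mem_frontDarts h hd).resolve_left (hno d hd)
  obtain ⟨t, ht, tmax⟩ := Set.exists_max_image _ (y ∘ T.tgt) (fin (T.frontDarts y A))
    (hA.frontDarts_nonempty h hne)
  have ht' : T.Desc y (T.rev t) := (src_or_tgt t ht).resolve_right fun htop ↦ by
    have nonpole := h.not_isPole_tgt (.inr htop)
    simp only [tgt_nxt_nxt, src_rev] at nonpole
    rcases hA.isFront.exists_above _ (hA.isFront.tgt_mem t ht) with ⟨d, hd, hsrc⟩ | ⟨b, hb, heq⟩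
    · exact (tmax d hd).not_gt ((congrArg y hsrc).symm.trans_lt hd.1)
    · exact nonpole (heq ▸ isPole_tgt hb)
  obtain ⟨e, ⟨he, he'⟩, emin⟩ := Set.exists_min_image _ (y ∘ T.src)
    (fin {d ∈ T.frontDarts y A | T.Desc y (T.rev d)}) ⟨t, ht, ht'⟩
  refine ⟨T.rev e, he', by simpa, ?_⟩
  have nonpole := h.not_isPole_tgt (.inr he')
  simp only [tgt_rev] at nonpole
  rcases hA.isFront.exists_below _ (hA.isFront.src_mem e he) with ⟨d, hd, htgt⟩ | ⟨b, hb, heq⟩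
  · have hd' : T.Desc y (T.nxt (T.nxt (T.rev d))) := (src_or_tgt d hd).resolve_left fun hbot ↦
      (emin d ⟨hd, hbot⟩).not_gt (lt_of_lt_of_eq hd.1 (congrArg y htgt))
    have := h.tgt_injOn_desc hd' he' (by simpa using htgt)
    rw [← this, nxt_nxt_nxt, rev_rev]
    exact hd
  · exact (nonpole (heq ▸ isPole_src hb)).elim

theorem exists_union_triangle (h : T.Bipolar y) (hne : A ≠ Set.univ) :
    ∃ m ∉ A, T.IsSwept y (A ∪ T.triangle m) := by
  by_cases hasc : ∃ d ∈ T.frontDarts y A, T.Asc y (T.nxt (T.rev d))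
  · obtain ⟨d, hd, hm⟩ := hasc
    have hmA := hA.disjoint_triangle hd.2.2 (T.nxt (T.rev d)) (.inr (.inl rfl))
    exact ⟨_, hmA, hA.union_of_asc h hm hmA (by simpa)⟩
  · push Not at hasc
    obtain ⟨m, hm, hm₁, hm₂⟩ := hA.exists_desc_mem_frontDarts h hne hasc
    have hmA : m ∉ A := by simpa using hm₁.2.2
    exact ⟨m, hmA, hA.union_of_desc h hm hmA hm₁ hm₂⟩

end IsSwept

theorem exists_sweep (h : T.Bipolar y) :
    ∃ A : ℕ → Set D, A 0 = ∅ ∧ Monotone A ∧ (∀ k, T.IsSwept y (A k)) ∧ (∃ k, A k = Set.univ) ∧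
      ∀ k, ∀ d ∈ A (k + 1) \ A k, T.rev d ∉ A (k + 1) \ A k := by
  have step (A : {A : Set D // T.IsSwept y A}) : ∃ A' : {A : Set D // T.IsSwept y A},
      A.1 ⊆ A'.1 ∧ (A'.1 = A.1 → A.1 = Set.univ) ∧ ∀ d ∈ A'.1 \ A.1, T.rev d ∉ A'.1 \ A.1 := by
    by_cases hne : A.1 = Set.univ
    · exact ⟨A, subset_rfl, fun _ ↦ hne, by simp⟩
    · obtain ⟨m, hm, hm'⟩ := A.2.exists_union_triangle h hne
      refine ⟨⟨_, hm'⟩, Set.subset_union_left, fun heq ↦ ?_, ?_⟩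
      · exact (hm (heq.subset (.inr (.inl rfl)))).elim
      · rintro d ⟨hd, hdA⟩ ⟨hr, hrA⟩
        exact rev_notMem_triangle (hd.resolve_left hdA) (hr.resolve_left hrA)
  choose next subset_next eq_univ rev_notMem using step
  let A : ℕ → {A : Set D // T.IsSwept y A} := fun k ↦ next^[k] ⟨∅, isSwept_empty h⟩
  have A_succ (k) : A (k + 1) = next (A k) := Function.iterate_succ_apply' _ _ _
  have mono : Monotone fun k ↦ (A k).1 := monotone_nat_of_le_succ fun k ↦ by
    rw [A_succ]
    exact subset_next _
  obtain ⟨k, hk⟩ := WellFoundedGT.monotone_chain_condition ⟨_, mono⟩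
  refine ⟨fun k ↦ (A k).1, rfl, mono, fun k ↦ (A k).2, ⟨k, eq_univ _ ?_⟩, fun k ↦ ?_⟩
  · rw [← A_succ]
    exact (hk (k + 1) k.le_succ).symm
  · simp only [A_succ]
    exact rev_notMem _

end SphereTriangulation

/-! ### Column layouts -/

namespace SphereTriangulation

variable {D X : Type*} [Fintype D] [Fintype X]

/-- A layout of a triangulation in columns, the combinatorial form of a plane drawing in which
every edge is vertical up to its two ends: vertices get distinct heights, an edge runs in the column
`col`, and a vertex, widened to a horizontal bar, occupies the interval of columns `span`. -/
structure ColumnLayout (T : SphereTriangulation D X) where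
  height : X → ℝ
  col : D → ℕ
  span : X → Set ℕ
  height_injective : Function.Injective height
  ordConnected_span : ∀ w, (span w).OrdConnected
  col_rev : ∀ d, col (T.rev d) = col d
  col_mem_span : ∀ d, col d ∈ span (T.src d)
  not_between : ∀ d w, col d ∈ span w →
    ¬ (height (T.src d) < height w ∧ height w < height (T.tgt d))
  disjoint : ∀ d d', T.Up height d → T.Up height d' → d ≠ d' → col d = col d' →
    height (T.tgt d) ≤ height (T.src d') ∨ height (T.tgt d') ≤ height (T.src d)

variable {T : SphereTriangulation D X} {y : X → ℝ}

theorem exists_mem_frontDarts {A : ℕ → Set D} (h₀ : A 0 = ∅) (hA : ∀ k, T.IsSwept y (A k))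
    (huniv : ∃ k, A k = Set.univ) (hrev : ∀ k, ∀ d ∈ A (k + 1) \ A k, T.rev d ∉ A (k + 1) \ A k)
    {d : D} (hd : T.Up y d) : ∃ k, d ∈ T.frontDarts y (A k) := by
  classical
  by_cases hb : d ∈ T.base
  · exact ⟨0, hd, .inr hb, by simp [h₀]⟩
  have hex : ∃ k, d ∈ A k := huniv.imp fun _ hk ↦ by simp [hk]
  have hmem := Nat.find_spec hex
  cases hk : Nat.find hex with
  | zero => simp [hk, h₀] at hmem
  | succ j =>
    have hj : d ∉ A j := Nat.find_min hex (by lia)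
    rw [hk] at hmem
    have hr : T.rev d ∉ A j := fun hr ↦ ((hA j).mem_or_base d hd hr).elim hj hb
    exact ⟨j + 1, hd, .inl hmem, fun hr' ↦ hrev j d ⟨hmem, hj⟩ ⟨hr', hr⟩⟩

theorem ordConnected_setOf_mem_frontVerts (h : T.Bipolar y) {A : ℕ → Set D} (hmono : Monotone A)
    (w : X) : {k | w ∈ T.frontVerts y (A k)}.OrdConnected := by
  refine ⟨fun i hi k hk j ⟨hij, hjk⟩ ↦ ?_⟩
  rcases hk with ⟨⟨d, -, hd, rfl⟩, d', hd'A, hd', htgt⟩ | ⟨b, hb, hbA, hw⟩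
  · rcases hi with ⟨⟨e, heA, he, hetgt⟩, -⟩ | ⟨b, hb, -, hw⟩
    · exact .inl ⟨⟨e, hmono hij heA, he, hetgt⟩, d', fun hj ↦ hd'A (hmono hjk hj), hd', htgt⟩
    · exact (h.not_isPole_tgt (.inl hd) (hw.elim (· ▸ isPole_src hb) (· ▸ isPole_tgt hb))).elim
  · exact .inr ⟨b, hb, fun hj ↦ hbA (hmono hjk hj), hw⟩

theorem nonempty_columnLayout (T : SphereTriangulation D X) : Nonempty T.ColumnLayout := by
  classical
  obtain ⟨y, h⟩ := T.exists_bipolar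
  obtain ⟨A, h₀, hmono, hA, huniv, hrev⟩ := exists_sweep h
  have hcol (d) : ∃ k, T.Up y d → d ∈ T.frontDarts y (A k) := by
    by_cases hd : T.Up y d
    · exact (exists_mem_frontDarts h₀ hA huniv hrev hd).imp fun _ hk _ ↦ hk
    · exact ⟨0, fun hd' ↦ (hd hd').elim⟩
  choose col hcol using hcol
  let col' (d : D) : ℕ := if T.Up y d then col d else col (T.rev d)
  have col'_up {d} (hd : T.Up y d) : col' d = col d := if_pos hd
  refine ⟨y, col', fun w ↦ {k | w ∈ T.frontVerts y (A k)}, h.injective,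
    ordConnected_setOf_mem_frontVerts h hmono, fun d ↦ ?_, fun d ↦ ?_, ?_, ?_⟩
  · by_cases hd : T.Up y d <;> simp [col', hd, h.up_rev]
  · by_cases hd : T.Up y d
    · exact col'_up hd ▸ (hA _).isFront.src_mem d (hcol d hd)
    · have := (hA _).isFront.tgt_mem _ (hcol (T.rev d) ((h.up_rev d).2 hd))
      simpa only [col', hd, if_false, tgt_rev, Set.mem_ofPred_eq] using this
  · rintro d w hw ⟨h₁, h₂⟩
    have hd : T.Up y d := h₁.trans h₂
    exact (hA _).isFront.not_between (hcol d hd) (col'_up hd ▸ hw) ⟨h₁, h₂⟩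
  · intro d d' hd hd' hne heq
    rw [col'_up hd, col'_up hd'] at heq
    exact (hA _).isFront.disjoint d (hcol d hd) d' (heq ▸ hcol d' hd') hne

end SphereTriangulation

/-! ### Straight-line drawings -/

/-- The line segment spanned by an edge when the vertices of a graph are placed at `pos`. -/
def chord {N : Type*} (pos : N → ℝ × ℝ) : Sym2 N → Set (ℝ × ℝ) :=
  Sym2.lift ⟨fun a b ↦ segment ℝ (pos a) (pos b), fun _ _ ↦ segment_symm ℝ _ _⟩

@[simp]
theorem chord_mk {N : Type*} (pos : N → ℝ × ℝ) (a b : N) :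
    chord pos s(a, b) = segment ℝ (pos a) (pos b) := rfl

/-- The straight-line drawing of a graph given by `pos` has no crossings: the segments of two edges
without a common end are disjoint. -/
def IsPlanarPlacement {N : Type*} (K : SimpleGraph N) (pos : N → ℝ × ℝ) : Prop :=
  ∀ e ∈ K.edgeSet, ∀ e' ∈ K.edgeSet, (∀ n ∈ e, n ∉ e') → Disjoint (chord pos e) (chord pos e')

theorem mem_uIcc_of_mem_segment {p q z : ℝ × ℝ} (h : z ∈ segment ℝ p q) :
    z.1 ∈ Set.uIcc p.1 q.1 ∧ z.2 ∈ Set.uIcc p.2 q.2 := by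
  rw [← segment_eq_uIcc, ← segment_eq_uIcc]
  obtain ⟨a, b, ha, hb, hab, rfl⟩ := h
  exact ⟨⟨a, b, ha, hb, hab, rfl⟩, ⟨a, b, ha, hb, hab, rfl⟩⟩

theorem exists_pos_forall_add_lt {X : Type*} [Finite X] (y : X → ℝ) :
    ∃ ε : ℝ, 0 < ε ∧ ∀ v w, y v < y w → y v + 2 * ε < y w := by
  have h : ∀ᶠ ε : ℝ in nhdsWithin 0 (Set.Ioi 0), ∀ v w, y v < y w → y v + 2 * ε < y w := by
    simp only [Filter.eventually_all]
    intro v w hvw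
    have hcont : ContinuousAt (fun ε : ℝ ↦ y v + 2 * ε) 0 := by fun_prop
    exact (hcont.eventually_lt_const (by simpa using hvw)).filter_mono nhdsWithin_le_nhds
  obtain ⟨ε, hε, hpos⟩ := (h.and self_mem_nhdsWithin).exists
  exact ⟨ε, hpos, hε⟩

namespace SphereTriangulation

variable {D X Y : Type*} [Fintype D] [Fintype X]

/-- The graph obtained from a triangulation by subdividing every edge twice: the dart `d` stands
for the subdivision vertex of its edge next to `src d`. The original vertices are relabelled along
`f`. -/
def subdivision (T : SphereTriangulation D X) (f : X → Y) : SimpleGraph (Y ⊕ D) :=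
  SimpleGraph.fromEdgeSet (Set.range (fun d ↦ s(.inl (f (T.src d)), .inr d)) ∪
    Set.range (fun d ↦ s(.inr d, .inr (T.rev d))))

variable {T : SphereTriangulation D X}

namespace ColumnLayout

/-- The point drawn for the bar of the vertex `w`. -/
noncomputable def vertexPos (L : T.ColumnLayout) (w : X) : ℝ × ℝ :=
  ((sInf (L.span w) : ℕ), L.height w)

open Classical in
/-- The point where the dart `d` leaves the `ε`-neighbourhood of the height of its source to run
vertically in its column. -/
noncomputable def bend (L : T.ColumnLayout) (ε : ℝ) (d : D) : ℝ × ℝ :=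
  (L.col d, L.height (T.src d) + if T.Up L.height d then ε else -ε)

variable {L : T.ColumnLayout} {ε : ℝ}

theorem sInf_span_mem (w : X) : sInf (L.span w) ∈ L.span w := by
  obtain ⟨d, rfl⟩ := T.src_surjective w
  exact Nat.sInf_mem ⟨_, L.col_mem_span d⟩

theorem abs_sub_le_of_mem_stub (hε : 0 < ε) {d : D} {z : ℝ × ℝ}
    (hz : z ∈ segment ℝ (L.vertexPos (T.src d)) (L.bend ε d)) :
    |z.2 - L.height (T.src d)| ≤ ε := by
  have h := (mem_uIcc_of_mem_segment hz).2
  have := Set.abs_sub_left_of_mem_uIcc h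
  refine this.trans_eq ?_
  simp [vertexPos, bend, apply_ite abs, abs_of_pos hε]

theorem mem_span_of_mem_stub {d : D} {z : ℝ × ℝ} {k : ℕ}
    (hz : z ∈ segment ℝ (L.vertexPos (T.src d)) (L.bend ε d)) (hk : z.1 = k) :
    k ∈ L.span (T.src d) := by
  have h := (mem_uIcc_of_mem_segment hz).1
  have h' : k ∈ Set.uIcc (sInf (L.span (T.src d))) (L.col d) := by
    simpa only [vertexPos, bend, hk, Set.mem_uIcc, Nat.cast_le] using h
  exact (L.ordConnected_span _).uIcc_subset (sInf_span_mem _) (L.col_mem_span d) h'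

theorem eq_bend_of_mem_stub (hε : 0 < ε) {d : D} {z : ℝ × ℝ}
    (hz : z ∈ segment ℝ (L.vertexPos (T.src d)) (L.bend ε d))
    (h : ε ≤ |z.2 - L.height (T.src d)|) : z = L.bend ε d := by
  rw [segment_eq_image_lineMap] at hz
  obtain ⟨t, ⟨ht₀, ht₁⟩, rfl⟩ := hz
  have ht : |(AffineMap.lineMap (L.vertexPos (T.src d)) (L.bend ε d) t).2 - L.height (T.src d)| =
      t * ε := by
    simp [AffineMap.lineMap_apply, vertexPos, bend, abs_mul, apply_ite abs, abs_of_pos hε,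
      abs_of_nonneg ht₀]
  have : t = 1 := le_antisymm ht₁ (by nlinarith)
  rw [this, AffineMap.lineMap_apply_one]

theorem bend_of_up {d : D} (hd : T.Up L.height d) :
    L.bend ε d = ((L.col d : ℝ), L.height (T.src d) + ε) := by simp [bend, hd]

theorem bend_rev_of_up {d : D} (hd : T.Up L.height d) :
    L.bend ε (T.rev d) = ((L.col d : ℝ), L.height (T.tgt d) - ε) := by
  simp [bend, up_rev_of_injective L.height_injective, hd, L.col_rev, sub_eq_add_neg]

theorem up_of_lt_bend (hε : 0 < ε) {d : D} (h : L.height (T.src d) < (L.bend ε d).2) :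
    T.Up L.height d := by
  by_contra hd
  simp only [bend, hd, if_false] at h
  linarith

theorem mem_middle (hgap : ∀ v w, L.height v < L.height w → L.height v + 2 * ε < L.height w)
    {d : D} (hd : T.Up L.height d) {z : ℝ × ℝ}
    (hz : z ∈ segment ℝ (L.bend ε d) (L.bend ε (T.rev d))) :
    z.1 = L.col d ∧ L.height (T.src d) + ε ≤ z.2 ∧ z.2 ≤ L.height (T.tgt d) - ε := by
  rw [bend_of_up hd, bend_rev_of_up hd] at hz
  obtain ⟨h₁, h₂⟩ := mem_uIcc_of_mem_segment hz
  rw [Set.uIcc_of_le (by linarith [hgap _ _ hd])] at h₂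
  exact ⟨by simpa using h₁, h₂⟩

theorem disjoint_stub_stub (hε : 0 < ε)
    (hgap : ∀ v w, L.height v < L.height w → L.height v + 2 * ε < L.height w)
    {d d' : D} (hne : T.src d ≠ T.src d') :
    Disjoint (segment ℝ (L.vertexPos (T.src d)) (L.bend ε d))
      (segment ℝ (L.vertexPos (T.src d')) (L.bend ε d')) := by
  rw [Set.disjoint_left]
  intro z hz hz'
  have h := abs_le.1 (abs_sub_le_of_mem_stub hε hz)
  have h' := abs_le.1 (abs_sub_le_of_mem_stub hε hz')
  rcases lt_or_gt_of_ne (L.height_injective.ne hne) with hlt | hlt <;> linarith [hgap _ _ hlt]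

theorem disjoint_middle_middle_of_up (hε : 0 < ε)
    (hgap : ∀ v w, L.height v < L.height w → L.height v + 2 * ε < L.height w)
    {d d' : D} (hd : T.Up L.height d) (hd' : T.Up L.height d') (hne : d ≠ d') :
    Disjoint (segment ℝ (L.bend ε d) (L.bend ε (T.rev d)))
      (segment ℝ (L.bend ε d') (L.bend ε (T.rev d'))) := by
  rw [Set.disjoint_left]
  intro z hz hz'
  obtain ⟨hcol, hlow, hhigh⟩ := mem_middle hgap hd hz
  obtain ⟨hcol', hlow', hhigh'⟩ := mem_middle hgap hd' hz'
  rw [hcol] at hcol'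
  rcases L.disjoint d d' hd hd' hne (by exact_mod_cast hcol') with h | h <;> linarith

theorem disjoint_stub_middle_of_up (hε : 0 < ε)
    (hgap : ∀ v w, L.height v < L.height w → L.height v + 2 * ε < L.height w)
    {d g : D} (hg : T.Up L.height g) (hne : d ≠ g) (hne' : T.rev d ≠ g) :
    Disjoint (segment ℝ (L.vertexPos (T.src d)) (L.bend ε d))
      (segment ℝ (L.bend ε g) (L.bend ε (T.rev g))) := by
  rw [Set.disjoint_left]
  intro z hz hz'
  obtain ⟨hcol, hlow, hhigh⟩ := mem_middle hgap hg hz'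
  have hnot := L.not_between g _ (mem_span_of_mem_stub hz hcol)
  have habs := abs_le.1 (abs_sub_le_of_mem_stub hε hz)
  have hup : L.height (T.src g) < L.height (T.tgt g) := hg
  have hcol_eq (hbend : z = L.bend ε d) : L.col d = L.col g := by
    rw [hbend] at hcol
    exact Nat.cast_injective (R := ℝ) hcol
  rcases le_or_gt (L.height (T.src d)) (L.height (T.src g)) with hle | hlt
  · have hbend := eq_bend_of_mem_stub hε hz ((by linarith : ε ≤ _).trans (le_abs_self _))
    have hd : T.Up L.height d := up_of_lt_bend hε (by rw [← hbend]; linarith)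
    rcases L.disjoint d g hd hg hne (hcol_eq hbend) with h | h <;> linarith [show _ < _ from hd]
  · have hge : L.height (T.tgt g) ≤ L.height (T.src d) := not_lt.1 fun h ↦ hnot ⟨hlt, h⟩
    have hbend := eq_bend_of_mem_stub hε hz ((by linarith : ε ≤ _).trans (neg_le_abs _))
    have hd : T.Up L.height (T.rev d) := by
      rw [up_rev_of_injective L.height_injective]
      intro hd
      rw [hbend, bend_of_up hd] at hhigh
      linarith
    have hd' : L.height (T.tgt d) < L.height (T.src d) := by simpa [Up] using hd
    rcases L.disjoint _ g hd hg hne' ((L.col_rev d).trans (hcol_eq hbend)) with h | h <;>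
      simp only [src_rev, tgt_rev] at h <;> linarith

theorem exists_up_segment_eq (L : T.ColumnLayout) (ε : ℝ) (d : D) :
    ∃ g, T.Up L.height g ∧ (g = d ∨ g = T.rev d) ∧
      segment ℝ (L.bend ε g) (L.bend ε (T.rev g)) =
        segment ℝ (L.bend ε d) (L.bend ε (T.rev d)) := by
  by_cases hd : T.Up L.height d
  · exact ⟨d, hd, .inl rfl, rfl⟩
  · exact ⟨T.rev d, (up_rev_of_injective L.height_injective d).2 hd, .inr rfl, by
      rw [T.rev_rev, segment_symm]⟩

theorem disjoint_middle_middle (hε : 0 < ε)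
    (hgap : ∀ v w, L.height v < L.height w → L.height v + 2 * ε < L.height w)
    {d d' : D} (hne : d ≠ d') (hne' : d ≠ T.rev d') :
    Disjoint (segment ℝ (L.bend ε d) (L.bend ε (T.rev d)))
      (segment ℝ (L.bend ε d') (L.bend ε (T.rev d'))) := by
  obtain ⟨g, hg, hgd, hseg⟩ := L.exists_up_segment_eq ε d
  obtain ⟨g', hg', hgd', hseg'⟩ := L.exists_up_segment_eq ε d'
  rw [← hseg, ← hseg']
  refine disjoint_middle_middle_of_up hε hgap hg hg' ?_
  rcases hgd with rfl | rfl <;> rcases hgd' with rfl | rfl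
  exacts [hne, hne', fun h ↦ hne' (by rw [← h, T.rev_rev]), T.rev_injective.ne hne]

theorem disjoint_stub_middle (hε : 0 < ε)
    (hgap : ∀ v w, L.height v < L.height w → L.height v + 2 * ε < L.height w)
    {d g : D} (hne : d ≠ g) (hne' : d ≠ T.rev g) :
    Disjoint (segment ℝ (L.vertexPos (T.src d)) (L.bend ε d))
      (segment ℝ (L.bend ε g) (L.bend ε (T.rev g))) := by
  obtain ⟨g', hg', hgg', hseg⟩ := L.exists_up_segment_eq ε g
  rw [← hseg]
  have hrev : T.rev d ≠ g := fun h ↦ hne' (by rw [← h, T.rev_rev])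
  rcases hgg' with rfl | rfl
  · exact disjoint_stub_middle_of_up hε hgap hg' hne hrev
  · exact disjoint_stub_middle_of_up hε hgap hg' hne' (T.rev_injective.ne hne)

end ColumnLayout

theorem exists_isPlanarPlacement_subdivision (T : SphereTriangulation D X) {f : X → Y}
    (hf : Function.Injective f) : ∃ pos, IsPlanarPlacement (T.subdivision f) pos := by
  obtain ⟨L⟩ := T.nonempty_columnLayout
  obtain ⟨ε, hε, hgap⟩ := exists_pos_forall_add_lt L.height
  refine ⟨Sum.elim (Function.extend f L.vertexPos 0) (L.bend ε), ?_⟩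
  intro e he e' he' hdisj
  rw [subdivision, SimpleGraph.edgeSet_fromEdgeSet] at he he'
  rcases he.1 with ⟨d, rfl⟩ | ⟨d, rfl⟩ <;> rcases he'.1 with ⟨d', rfl⟩ | ⟨d', rfl⟩ <;>
    simp only [chord_mk, Sum.elim_inl, Sum.elim_inr, hf.extend_apply]
  · exact ColumnLayout.disjoint_stub_stub hε hgap
      fun h ↦ hdisj (.inl (f (T.src d))) (by simp) (by simp [h])
  · exact ColumnLayout.disjoint_stub_middle hε hgap
      (fun h ↦ hdisj (.inr d) (by simp) (by simp [h]))
      (fun h ↦ hdisj (.inr d) (by simp) (by simp [h]))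
  · exact (ColumnLayout.disjoint_stub_middle hε hgap
      (fun h ↦ hdisj (.inr d') (by simp [h]) (by simp))
      (fun h ↦ hdisj (.inr d') (by simp [h]) (by simp))).symm
  · exact ColumnLayout.disjoint_middle_middle hε hgap
      (fun h ↦ hdisj (.inr d) (by simp) (by simp [h]))
      (fun h ↦ hdisj (.inr d) (by simp) (by simp [h]))

end SphereTriangulation

/-! ### General position -/

/-- Points of the plane in general position: they are distinct and no three are collinear. -/
structure InGeneralPosition {I : Type*} (p : I → ℝ × ℝ) : Prop where
  injective : Function.Injective p
  not_collinear : ∀ i j k, i ≠ j → i ≠ k → j ≠ k → ¬ Collinear ℝ {p i, p j, p k}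

theorem InGeneralPosition.comp {I J : Type*} {p : I → ℝ × ℝ} (hp : InGeneralPosition p)
    {f : J → I} (hf : Function.Injective f) : InGeneralPosition (p ∘ f) :=
  ⟨hp.injective.comp hf, fun _ _ _ hij hik hjk ↦
    hp.not_collinear _ _ _ (hf.ne hij) (hf.ne hik) (hf.ne hjk)⟩

theorem segment_subset_affineSpan_pair (a b : ℝ × ℝ) :
    segment ℝ a b ⊆ (line[ℝ, a, b] : Set (ℝ × ℝ)) :=
  convexHull_pair (𝕜 := ℝ) a b ▸ convexHull_subset_affineSpan _

theorem subsingleton_segment_inter_segment {a b c d : ℝ × ℝ} (h : ¬ Collinear ℝ {c, a, b}) :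
    (segment ℝ a b ∩ segment ℝ c d).Subsingleton := by
  rintro z ⟨hz, hz'⟩ w ⟨hw, hw'⟩
  by_contra hne
  have hline := affineSpan_pair_eq_of_mem_of_mem_of_ne (segment_subset_affineSpan_pair a b hz)
    (segment_subset_affineSpan_pair a b hw) hne
  have hline' := affineSpan_pair_eq_of_mem_of_mem_of_ne (segment_subset_affineSpan_pair c d hz')
    (segment_subset_affineSpan_pair c d hw') hne
  refine h (collinear_insert_of_mem_affineSpan_pair ?_)
  rw [← hline, hline']
  exact left_mem_affineSpan_pair ℝ c d

theorem InGeneralPosition.subsingleton_chord_inter_chord {N : Type*} {q : N → ℝ × ℝ}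
    (hq : InGeneralPosition q) {e e' : Sym2 N} (he : ¬ e.IsDiag) (he' : ¬ e'.IsDiag)
    (hne : e ≠ e') : (chord q e ∩ chord q e').Subsingleton := by
  induction e with | _ a b
  induction e' with | _ c d
  simp only [Sym2.mk_isDiag_iff] at he he'
  by_cases hc : c = a ∨ c = b
  · have hd : d ≠ a ∧ d ≠ b := by
      constructor <;> rintro rfl <;> rcases hc with rfl | rfl <;> simp_all [Sym2.eq_swap]
    rw [chord_mk, chord_mk, segment_symm ℝ (q c)]
    exact subsingleton_segment_inter_segment (hq.not_collinear _ _ _ hd.1 hd.2 he)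
  · rw [not_or] at hc
    exact subsingleton_segment_inter_segment (hq.not_collinear _ _ _ hc.1 hc.2 he)

theorem cross_eq_zero_of_collinear {a b c : ℝ × ℝ} (h : Collinear ℝ {a, b, c}) :
    (b.1 - a.1) * (c.2 - a.2) - (b.2 - a.2) * (c.1 - a.1) = 0 := by
  obtain ⟨v, hv⟩ := (collinear_iff_of_mem (Set.mem_insert a {b, c})).1 h
  obtain ⟨r, rfl⟩ := hv b (by simp)
  obtain ⟨s, rfl⟩ := hv c (by simp)
  simp only [vadd_eq_add, Prod.fst_add, Prod.smul_fst, Prod.snd_add, Prod.smul_snd, smul_eq_mul]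
  ring

section Perturbation

open Filter Topology Polynomial

theorem eventually_eval_ne_zero {f : ℝ[X]} (hf : f ≠ 0) (x : ℝ) : ∀ᶠ t in 𝓝[≠] x, f.eval t ≠ 0 :=
  nhdsNE_le_cofinite x (Polynomial.finite_setOfPred_isRoot hf).compl_mem_cofinite

theorem isCompact_segment (a b : ℝ × ℝ) : IsCompact (segment ℝ a b) :=
  convexHull_pair (𝕜 := ℝ) a b ▸ (Set.toFinite {a, b}).isCompact_convexHull ℝ

theorem eventually_disjoint_segment {ι : Type*} {l : Filter ι} {a b c d : ι → ℝ × ℝ}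
    {a₀ b₀ c₀ d₀ : ℝ × ℝ} (ha : Tendsto a l (𝓝 a₀)) (hb : Tendsto b l (𝓝 b₀))
    (hc : Tendsto c l (𝓝 c₀)) (hd : Tendsto d l (𝓝 d₀))
    (h : Disjoint (segment ℝ a₀ b₀) (segment ℝ c₀ d₀)) :
    ∀ᶠ t in l, Disjoint (segment ℝ (a t) (b t)) (segment ℝ (c t) (d t)) := by
  obtain ⟨δ, hδ, hdisj⟩ := h.exists_thickenings (isCompact_segment _ _)
    (isCompact_segment _ _).isClosed
  have near {f : ι → ℝ × ℝ} {x : ℝ × ℝ} {S : Set (ℝ × ℝ)} (hf : Tendsto f l (𝓝 x)) (hx : x ∈ S) :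
      ∀ᶠ t in l, f t ∈ Metric.thickening δ S :=
    hf (Metric.isOpen_thickening.mem_nhds (Metric.self_subset_thickening hδ S hx))
  filter_upwards [near ha (left_mem_segment ℝ a₀ b₀), near hb (right_mem_segment ℝ a₀ b₀),
    near hc (left_mem_segment ℝ c₀ d₀), near hd (right_mem_segment ℝ c₀ d₀)] with t hat hbt hct hdt
  exact hdisj.mono (((convex_segment _ _).thickening δ).segment_subset hat hbt)
    (((convex_segment _ _).thickening δ).segment_subset hct hdt)

variable {I : Type*} (c : I → ℝ × ℝ)

/-- The point `c i` moved towards the point with parameter `s` of a parabola. No three points of a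
parabola are collinear. -/
def moveAlongParabola (s : I → ℝ) (t : ℝ) (i : I) : ℝ × ℝ := c i + t • (s i, s i ^ 2)

variable {s : I → ℝ}

theorem eventually_moveAlongParabola_ne (hs : Function.Injective s) {i j : I} (hij : i ≠ j) :
    ∀ᶠ t in 𝓝[≠] 0, moveAlongParabola c s t i ≠ moveAlongParabola c s t j := by
  have hlead : s i - s j ≠ 0 := sub_ne_zero.2 (hs.ne hij)
  have hpoly : C (s i - s j) * X + C ((c i).1 - (c j).1) ≠ 0 := fun h ↦ hlead <| by
    rw [← leadingCoeff_linear (b := (c i).1 - (c j).1) hlead, h, leadingCoeff_zero]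
  filter_upwards [eventually_eval_ne_zero hpoly 0] with t ht heq
  refine ht ?_
  have := congrArg Prod.fst heq
  simp only [moveAlongParabola, Prod.fst_add, Prod.smul_fst, smul_eq_mul] at this
  simp only [eval_add, eval_mul, eval_C, eval_X]
  linear_combination this

theorem eventually_not_collinear_moveAlongParabola (hs : Function.Injective s) {i j k : I}
    (hij : i ≠ j) (hik : i ≠ k) (hjk : j ≠ k) :
    ∀ᶠ t in 𝓝[≠] 0, ¬ Collinear ℝ
      {moveAlongParabola c s t i, moveAlongParabola c s t j, moveAlongParabola c s t k} := by
  set A := (s j - s i) * (s k - s i) * (s k - s j)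
  set B := ((c j).1 - (c i).1) * (s k ^ 2 - s i ^ 2) + (s j - s i) * ((c k).2 - (c i).2)
    - ((c j).2 - (c i).2) * (s k - s i) - (s j ^ 2 - s i ^ 2) * ((c k).1 - (c i).1)
  set E := ((c j).1 - (c i).1) * ((c k).2 - (c i).2) - ((c j).2 - (c i).2) * ((c k).1 - (c i).1)
  have hA : A ≠ 0 := mul_ne_zero (mul_ne_zero (sub_ne_zero.2 (hs.ne hij.symm))
    (sub_ne_zero.2 (hs.ne hik.symm))) (sub_ne_zero.2 (hs.ne hjk.symm))
  have hpoly : C A * X ^ 2 + C B * X + C E ≠ 0 := fun h ↦ hA <| by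
    rw [← leadingCoeff_quadratic (b := B) (c := E) hA, h, leadingCoeff_zero]
  filter_upwards [eventually_eval_ne_zero hpoly 0] with t ht hcol
  refine ht ?_
  have := cross_eq_zero_of_collinear hcol
  simp only [moveAlongParabola, Prod.fst_add, Prod.smul_fst, Prod.snd_add, Prod.smul_snd,
    smul_eq_mul] at this
  simp only [eval_add, eval_mul, eval_C, eval_X, eval_pow]
  linear_combination this

theorem exists_inGeneralPosition [Finite I] : ∃ p : I → ℝ × ℝ, InGeneralPosition p ∧
    ∀ i j k l, Disjoint (segment ℝ (c i) (c j)) (segment ℝ (c k) (c l)) →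
      Disjoint (segment ℝ (p i) (p j)) (segment ℝ (p k) (p l)) := by
  let s (i : I) : ℝ := (Finite.equivFin I i : ℕ)
  have hs : Function.Injective s :=
    Nat.cast_injective.comp (Fin.val_injective.comp (Finite.equivFin I).injective)
  have hlim (i) : Tendsto (fun t ↦ moveAlongParabola c s t i) (𝓝[≠] 0) (𝓝 (c i)) := by
    have hcont : Continuous fun t ↦ moveAlongParabola c s t i := by
      unfold moveAlongParabola
      fun_prop
    simpa [moveAlongParabola] using (hcont.tendsto 0).mono_left nhdsWithin_le_nhds
  have hne : ∀ᶠ t in 𝓝[≠] 0, ∀ i j, i ≠ j →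
      moveAlongParabola c s t i ≠ moveAlongParabola c s t j := by
    simpa only [eventually_all] using fun i j ↦ eventually_moveAlongParabola_ne c hs
  have hcol : ∀ᶠ t in 𝓝[≠] 0, ∀ i j k, i ≠ j → i ≠ k → j ≠ k → ¬ Collinear ℝ
      {moveAlongParabola c s t i, moveAlongParabola c s t j, moveAlongParabola c s t k} := by
    simpa only [eventually_all] using fun i j k ↦ eventually_not_collinear_moveAlongParabola c hs
  have hdisj : ∀ᶠ t in 𝓝[≠] (0 : ℝ), ∀ i j k l,
      Disjoint (segment ℝ (c i) (c j)) (segment ℝ (c k) (c l)) →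
      Disjoint (segment ℝ (moveAlongParabola c s t i) (moveAlongParabola c s t j))
        (segment ℝ (moveAlongParabola c s t k) (moveAlongParabola c s t l)) := by
    simpa only [eventually_all] using
      fun i j k l ↦ eventually_disjoint_segment (hlim i) (hlim j) (hlim k) (hlim l)
  obtain ⟨t, hne, hcol, hdisj⟩ := (hne.and (hcol.and hdisj)).exists
  exact ⟨_, ⟨fun i j h ↦ not_imp_not.1 (hne i j) h, hcol⟩, hdisj⟩

end Perturbation

/-! ### Polygonal arcs -/

theorem injective_trans {E : Type*} [TopologicalSpace E] {a b c : E} {γ : Path a b} {γ' : Path b c}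
    (hγ : Function.Injective γ) (hγ' : Function.Injective γ')
    (hmeet : ∀ z, z ∈ Set.range γ → z ∈ Set.range γ' → z = b) :
    Function.Injective (γ.trans γ') := by
  have hne {s t : unitInterval} (hs : (s : ℝ) ≤ 1 / 2) (ht : ¬ (t : ℝ) ≤ 1 / 2) :
      (γ.trans γ') s ≠ (γ.trans γ') t := by
    intro heq
    rw [Path.trans_apply, Path.trans_apply, dif_pos hs, dif_neg ht] at heq
    rw [hmeet _ ⟨_, rfl⟩ ⟨_, heq.symm⟩] at heq
    have : (0 : ℝ) = 2 * t - 1 := congrArg Subtype.val (hγ' (γ'.source.trans heq))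
    exact ht (by linarith)
  intro s t heq
  by_cases hs : (s : ℝ) ≤ 1 / 2 <;> by_cases ht : (t : ℝ) ≤ 1 / 2
  · rw [Path.trans_apply, Path.trans_apply, dif_pos hs, dif_pos ht] at heq
    have : 2 * (s : ℝ) = 2 * t := congrArg Subtype.val (hγ heq)
    exact Subtype.ext (by linarith)
  · exact (hne hs ht heq).elim
  · exact (hne ht hs heq.symm).elim
  · rw [Path.trans_apply, Path.trans_apply, dif_neg hs, dif_neg ht] at heq
    have : 2 * (s : ℝ) - 1 = 2 * t - 1 := congrArg Subtype.val (hγ' heq)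
    exact Subtype.ext (by linarith)

theorem exists_path_range_eq_segment {a b : ℝ × ℝ} (hab : a ≠ b) :
    ∃ γ : Path a b, Function.Injective γ ∧ Set.range γ = segment ℝ a b := by
  refine ⟨⟨⟨fun t ↦ AffineMap.lineMap a b (t : ℝ), by fun_prop⟩, by simp, by simp⟩, ?_, ?_⟩
  · exact fun s t heq ↦ Subtype.ext (AffineMap.lineMap_injective ℝ hab heq)
  · rw [segment_eq_image_lineMap, Set.image_eq_range]
    rfl

theorem mem_chord {N : Type*} (q : N → ℝ × ℝ) {n : N} {e : Sym2 N} (hn : n ∈ e) :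
    q n ∈ chord q e := by
  obtain ⟨m, rfl⟩ := hn
  exact left_mem_segment ℝ _ _

theorem eq_of_mem_chord_of_mem_walk {N : Type*} {K : SimpleGraph N} {q : N → ℝ × ℝ}
    (hq : InGeneralPosition q) (hK : IsPlanarPlacement K q) {a b c : N} (h : K.Adj a b)
    {w : K.Walk b c} (ha : a ∉ w.support) {z : ℝ × ℝ} (hz : z ∈ segment ℝ (q a) (q b))
    (hz' : z ∈ ⋃ e ∈ w.edges, chord q e) : z = q b := by
  obtain ⟨e, he, hze⟩ := Set.mem_iUnion₂.1 hz'
  have heK := w.edges_subset_edgeSet he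
  have hae : a ∉ e := fun hae ↦ ha (w.mem_support_of_mem_edges he hae)
  by_cases hbe : b ∈ e
  · have hne : s(a, b) ≠ e := by
      rintro rfl
      simp at hae
    exact hq.subsingleton_chord_inter_chord (K.not_isDiag_of_mem_edgeSet h)
      (K.not_isDiag_of_mem_edgeSet heK) hne ⟨hz, hze⟩ ⟨mem_chord q (by simp), mem_chord q hbe⟩
  · refine (Set.disjoint_left.1 (hK s(a, b) h _ heK fun n hn ↦ ?_) hz hze).elim
    rcases Sym2.mem_iff.1 hn with rfl | rfl <;> assumption

theorem exists_path_range_eq_iUnion_chord {N : Type*} {K : SimpleGraph N} {q : N → ℝ × ℝ}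
    (hq : InGeneralPosition q) (hK : IsPlanarPlacement K q) {a b : N} (w : K.Walk a b)
    (hw : w.IsPath) (hab : a ≠ b) :
    ∃ γ : Path (q a) (q b), Function.Injective γ ∧ Set.range γ = ⋃ e ∈ w.edges, chord q e := by
  induction w with
  | nil => exact (hab rfl).elim
  | @cons a c b h w ih =>
    obtain ⟨hw, ha⟩ := (SimpleGraph.Walk.cons_isPath_iff h w).1 hw
    obtain ⟨γ, hγ, hrange⟩ := exists_path_range_eq_segment (hq.injective.ne h.ne)
    by_cases hcb : c = b
    · subst hcb
      obtain rfl := SimpleGraph.Walk.eq_nil_iff_nil.2 (SimpleGraph.Walk.isPath_iff_nil.1 hw)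
      exact ⟨γ, hγ, by simp [hrange]⟩
    · obtain ⟨γ', hγ', hrange'⟩ := ih hw hcb
      refine ⟨γ.trans γ', injective_trans hγ hγ' fun z hz hz' ↦ ?_, ?_⟩
      · exact eq_of_mem_chord_of_mem_walk hq hK h ha (hrange ▸ hz) (hrange' ▸ hz')
      · simp [Path.trans_range, hrange, hrange', Set.iUnion_or, Set.iUnion_union_distrib]

theorem exists_continuous_injective_unitSphere :
    ∃ ι : ℝ × ℝ → unitSphere, Continuous ι ∧ Function.Injective ι := by
  let f (z : ℝ × ℝ) : EuclideanSpace ℝ (Fin 3) := !₂[z.1, z.2, 1]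
  have hf : Continuous f := by fun_prop
  have hnorm (z) : ‖f z‖ ≠ 0 := by
    refine norm_ne_zero_iff.2 fun h ↦ ?_
    simpa [f] using congrArg (· 2) h
  have hmem (z) : ‖f z‖⁻¹ • f z ∈ unitSphere := by
    rw [unitSphere, mem_sphere_zero_iff_norm, norm_smul, norm_inv, norm_norm,
      inv_mul_cancel₀ (hnorm z)]
  refine ⟨fun z ↦ ⟨_, hmem z⟩, ((hf.norm.inv₀ hnorm).smul hf).subtype_mk hmem, ?_⟩
  · intro z w h
    have hsmul : ‖f z‖⁻¹ • f z = ‖f w‖⁻¹ • f w := congrArg Subtype.val h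
    have hinv : ‖f z‖⁻¹ = ‖f w‖⁻¹ := by simpa [f] using congrArg (· 2) hsmul
    rw [hinv] at hsmul
    have heq : f z = f w := smul_right_injective _ (inv_ne_zero (hnorm w)) hsmul
    exact Prod.ext (by simpa [f] using congrArg (· 0) heq) (by simpa [f] using congrArg (· 1) heq)

/-! ### Routings -/

theorem ncard_neighborSet_toSubgraph_le_two {N : Type*} {K : SimpleGraph N} {a b : N}
    {w : K.Walk a b} (hw : w.IsPath) (n : N) : (w.toSubgraph.neighborSet n).ncard ≤ 2 := by
  by_cases hn : n ∈ w.support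
  · obtain ⟨i, rfl, hi⟩ := SimpleGraph.Walk.mem_support_iff_exists_getVert.1 hn
    refine (Set.ncard_le_ncard ?_ (Set.toFinite {w.getVert (i - 1), w.getVert (i + 1)})).trans
      ((Set.ncard_insert_le _ _).trans_eq (by rw [Set.ncard_singleton]))
    intro m hm
    obtain ⟨j, hj, hjlen⟩ := (SimpleGraph.Walk.toSubgraph_adj_iff w).1 hm
    rcases Sym2.eq_iff.1 hj with ⟨heq, rfl⟩ | ⟨rfl, heq⟩
    · rw [hw.getVert_injOn (by simpa using hjlen.le) (by simpa using hi) heq]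
      simp
    · rw [← hw.getVert_injOn (by simpa using hjlen) (by simpa using hi) heq]
      simp
  · have : w.toSubgraph.neighborSet n = ∅ := Set.eq_empty_of_forall_notMem fun m hm ↦
      hn (w.mem_verts_toSubgraph.1 (w.toSubgraph.edge_vert hm))
    simp [this]

/-- A routing of the graph `G` in the graph `K`: the vertices of `G` sit at pairwise nonadjacent
nodes of `K`, and every edge of `G` follows a path of `K` between its two ends that visits no other
vertex. The ends of an edge are ordered by `Quot.out`. -/
structure Routing {V N : Type*} (G : SimpleGraph V) (K : SimpleGraph N) where
  node : V → N
  node_injective : Function.Injective node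
  not_adj : ∀ v w, ¬ K.Adj (node v) (node w)
  path : ∀ e : G.edgeSet, K.Path (node (Quot.out (e : Sym2 V)).1) (node (Quot.out (e : Sym2 V)).2)
  mem_of_node_mem : ∀ e v, node v ∈ (path e).1.support → v ∈ (e : Sym2 V)

namespace Routing

variable {V N : Type*} {G : SimpleGraph V} {K : SimpleGraph N} (r : Routing G K)

open Classical in
/-- The name of the node `n` as a corner of the edge `e`. Distinct edges get distinct copies of the
nodes that are not vertices, so that these copies can be moved independently. -/
noncomputable def label (e : G.edgeSet) (n : N) : V ⊕ (G.edgeSet × N) :=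
  if h : ∃ v, r.node v = n then .inl h.choose else .inr (e, n)

theorem label_node (e : G.edgeSet) (v : V) : r.label e (r.node v) = .inl v := by
  have h : ∃ w, r.node w = r.node v := ⟨v, rfl⟩
  rw [label, dif_pos h, r.node_injective h.choose_spec]

theorem label_of_notMem (e : G.edgeSet) {n : N} (hn : n ∉ Set.range r.node) :
    r.label e n = .inr (e, n) := dif_neg hn

theorem elim_label (e : G.edgeSet) (n : N) : Sum.elim r.node Prod.snd (r.label e n) = n := by
  by_cases hn : n ∈ Set.range r.node
  · obtain ⟨v, rfl⟩ := hn
    rw [label_node, Sum.elim_inl]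
  · rw [r.label_of_notMem e hn, Sum.elim_inr]

theorem label_injective (e : G.edgeSet) : Function.Injective (r.label e) :=
  Function.LeftInverse.injective (r.elim_label e)

/-- Positions of the corners of all edges which are in general position and for which segments over
disjoint edges of the net are disjoint. -/
structure IsGeneric (p : V ⊕ (G.edgeSet × N) → ℝ × ℝ) : Prop where
  inGeneralPosition : InGeneralPosition p
  disjoint : ∀ e e', ∀ a ∈ K.edgeSet, ∀ a' ∈ K.edgeSet, (∀ n ∈ a, n ∉ a') →
    Disjoint (chord (p ∘ r.label e) a) (chord (p ∘ r.label e') a')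

theorem exists_isGeneric [Finite V] [Finite N] {pos : N → ℝ × ℝ} (hK : IsPlanarPlacement K pos) :
    ∃ p, r.IsGeneric p := by
  obtain ⟨p, hp, hdisj⟩ := exists_inGeneralPosition (I := V ⊕ (G.edgeSet × N))
    (pos ∘ Sum.elim r.node Prod.snd)
  refine ⟨p, hp, fun e e' a ha a' ha' haa' ↦ ?_⟩
  have hpos := hK a ha a' ha' haa'
  induction a with | _ i j
  induction a' with | _ k l
  refine hdisj (r.label e i) (r.label e j) (r.label e' k) (r.label e' l) ?_
  simp only [Function.comp_apply, elim_label]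
  exact hpos

/-- The polygonal line drawn for the edge `e`. -/
def trace (p : V ⊕ (G.edgeSet × N) → ℝ × ℝ) (e : G.edgeSet) : Set (ℝ × ℝ) :=
  ⋃ a ∈ (r.path e).1.edges, chord (p ∘ r.label e) a

namespace IsGeneric

variable {r} {p : V ⊕ (G.edgeSet × N) → ℝ × ℝ} (hp : r.IsGeneric p)

include hp

theorem comp_label (e : G.edgeSet) : InGeneralPosition (p ∘ r.label e) :=
  hp.inGeneralPosition.comp (r.label_injective e)

theorem mem_of_mem_trace {e : G.edgeSet} {v : V} (hv : p (.inl v) ∈ r.trace p e) :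
    v ∈ (e : Sym2 V) := by
  obtain ⟨a, ha, hva⟩ := Set.mem_iUnion₂.1 hv
  by_contra hve
  have hne {n} (hn : n ∈ a) : .inl v ≠ r.label e n := by
    rw [← r.label_node e]
    rintro heq
    rw [← r.label_injective e heq] at hn
    exact hve (r.mem_of_node_mem e v ((r.path e).1.mem_support_of_mem_edges ha hn))
  induction a with | _ i j
  have hadj : K.Adj i j := (r.path e).1.edges_subset_edgeSet ha
  exact hp.inGeneralPosition.not_collinear _ _ _ (hne (Sym2.mem_mk_left i j))
    (hne (Sym2.mem_mk_right i j)) ((r.label_injective e).ne hadj.ne)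
    (collinear_insert_of_mem_affineSpan_pair (segment_subset_affineSpan_pair _ _ hva))

theorem exists_path (e : G.edgeSet) :
    ∃ γ : Path (p (.inl (Quot.out (e : Sym2 V)).1)) (p (.inl (Quot.out (e : Sym2 V)).2)),
      Function.Injective γ ∧ Set.range γ = r.trace p e := by
  have hne : r.node (Quot.out (e : Sym2 V)).1 ≠ r.node (Quot.out (e : Sym2 V)).2 := by
    refine r.node_injective.ne (G.ne_of_adj ?_)
    rw [← SimpleGraph.mem_edgeSet, Sym2.mk, Quot.out_eq]
    exact e.2
  obtain ⟨γ, hγ, hrange⟩ := exists_path_range_eq_iUnion_chord (hp.comp_label e)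
    (hp.disjoint e e) (r.path e).1 (r.path e).2 hne
  exact ⟨γ.cast (congrArg p (r.label_node e _).symm) (congrArg p (r.label_node e _).symm), hγ,
    hrange⟩

theorem exists_drawing {ι : ℝ × ℝ → unitSphere} (hcont : Continuous ι)
    (hinj : Function.Injective ι) : ∃ Dr : Drawing G, (∀ v, Dr.vmap v = ι (p (.inl v))) ∧
      ∀ e : G.edgeSet, Set.range (Dr.arc e) = ι '' r.trace p e := by
  classical
  choose γ hγ hrange using hp.exists_path
  let arc (e : Sym2 V) : C(Set.Icc (0 : ℝ) 1, unitSphere) :=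
    if he : e ∈ G.edgeSet then ⟨ι ∘ γ ⟨e, he⟩, hcont.comp (γ _).continuous⟩ else .const _ (ι 0)
  have arc_apply {e} (he : e ∈ G.edgeSet) (t) : arc e t = ι (γ ⟨e, he⟩ t) := by simp [arc, he]
  refine ⟨⟨fun v ↦ ι (p (.inl v)),
    hinj.comp (hp.inGeneralPosition.injective.comp Sum.inl_injective), arc, ?_, ?_, ?_⟩,
    fun v ↦ rfl, fun e ↦ ?_⟩
  · intro e he s t heq
    rw [arc_apply he, arc_apply he] at heq
    exact hγ _ (hinj heq)
  · intro e he
    rw [arc_apply he, arc_apply he]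
    conv_lhs => rw [← Quot.out_eq e]
    exact congrArg₂ (fun x y ↦ s(ι x, ι y)) (γ ⟨e, he⟩).source.symm (γ ⟨e, he⟩).target.symm
  · rintro e he t ht₀ ht₁ ⟨v, hv⟩
    rw [arc_apply he] at hv
    have hv := hinj hv
    have hve : v ∈ e := hp.mem_of_mem_trace (e := ⟨e, he⟩) (hrange _ ▸ ⟨t, hv.symm⟩)
    rw [← Quot.out_eq e] at hve
    rcases Sym2.mem_iff.1 hve with rfl | rfl
    · exact ht₀ (congrArg Subtype.val (hγ _ (hv.symm.trans (γ ⟨e, he⟩).source.symm)))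
    · exact ht₁ (congrArg Subtype.val (hγ _ (hv.symm.trans (γ ⟨e, he⟩).target.symm)))
  · rw [← hrange e, ← Set.range_comp]
    exact congrArg Set.range (funext (arc_apply e.2))

end IsGeneric

/-- The places where the route of `e` meets the routes of other edges: pairs of a node that is not
a vertex of `G` and of another edge passing through it. -/
def shared (e : G.edgeSet) : Set (N × G.edgeSet) :=
  {x | x.1 ∉ Set.range r.node ∧ x.2 ≠ e ∧ x.1 ∈ (r.path e).1.support ∧
    x.1 ∈ (r.path x.2).1.support}

/-- A pair of segments of the routes of `e` and `x.2` that end in the node `x.1`. -/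
abbrev Pencil (e : G.edgeSet) (x : N × G.edgeSet) : Type _ :=
  (r.path e).1.toSubgraph.neighborSet x.1 × (r.path x.2).1.toSubgraph.neighborSet x.1

theorem card_sigma_pencil_le [Finite V] [Finite N] (e : G.edgeSet) :
    Nat.card (Σ x : r.shared e, r.Pencil e x) ≤ 4 * (r.shared e).ncard := by
  have := Fintype.ofFinite (r.shared e)
  rw [Nat.card_sigma, ← Nat.card_coe_set_eq, Nat.card_eq_fintype_card, mul_comm, ← smul_eq_mul]
  refine Finset.sum_le_card_nsmul _ _ _ fun x _ ↦ ?_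
  rw [Nat.card_prod]
  exact Nat.mul_le_mul (ncard_neighborSet_toSubgraph_le_two (r.path e).2 _)
    (ncard_neighborSet_toSubgraph_le_two (r.path x.1.2).2 _)

namespace IsGeneric

variable {r} {p : V ⊕ (G.edgeSet × N) → ℝ × ℝ} (hp : r.IsGeneric p)

include hp

theorem subsingleton_chord_inter_chord {e e' : G.edgeSet} (hne : e ≠ e') {a a' : Sym2 N}
    (ha : a ∈ K.edgeSet) (ha' : a' ∈ K.edgeSet) :
    (chord (p ∘ r.label e) a ∩ chord (p ∘ r.label e') a').Subsingleton := by
  induction a with | _ i j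
  induction a' with | _ k l
  refine hp.inGeneralPosition.subsingleton_chord_inter_chord
    (e := s(r.label e i, r.label e j)) (e' := s(r.label e' k, r.label e' l))
    ((r.label_injective e).ne (K.ne_of_adj ha)) ((r.label_injective e').ne (K.ne_of_adj ha')) ?_
  obtain ⟨n, hn, hnode⟩ : ∃ n ∈ s(i, j), n ∉ Set.range r.node := by
    by_contra! h
    obtain ⟨v, rfl⟩ := h i (Sym2.mem_mk_left i j)
    obtain ⟨w, rfl⟩ := h j (Sym2.mem_mk_right _ j)
    exact r.not_adj v w ha
  have label_ne (m : N) : r.label e n ≠ r.label e' m := by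
    rw [r.label_of_notMem e hnode]
    by_cases hm : m ∈ Set.range r.node
    · obtain ⟨v, rfl⟩ := hm
      rw [r.label_node]
      exact Sum.inr_ne_inl
    · rw [r.label_of_notMem e' hm]
      exact fun h ↦ hne (congrArg Prod.fst (Sum.inr_injective h))
  intro heq
  have : r.label e n ∈ s(r.label e' k, r.label e' l) :=
    heq ▸ Sym2.mem_map.2 ⟨n, hn, rfl⟩
  rcases Sym2.mem_iff.1 this with h | h
  exacts [label_ne k h, label_ne l h]

theorem exists_common_node {e e' : G.edgeSet} (hne : e ≠ e') {z : ℝ × ℝ} (hz : z ∈ r.trace p e)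
    (hz' : z ∈ r.trace p e') (hzv : ∀ v, z ≠ p (.inl v)) :
    ∃ n m m', n ∉ Set.range r.node ∧ (r.path e).1.toSubgraph.Adj n m ∧
      (r.path e').1.toSubgraph.Adj n m' ∧
      z ∈ chord (p ∘ r.label e) s(n, m) ∩ chord (p ∘ r.label e') s(n, m') := by
  obtain ⟨a, ha, hza⟩ := Set.mem_iUnion₂.1 hz
  obtain ⟨a', ha', hza'⟩ := Set.mem_iUnion₂.1 hz'
  have haK := (r.path e).1.edges_subset_edgeSet ha
  have haK' := (r.path e').1.edges_subset_edgeSet ha'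
  obtain ⟨n, hn, hn'⟩ : ∃ n ∈ a, n ∈ a' := by
    by_contra! h
    exact Set.disjoint_left.1 (hp.disjoint e e' a haK a' haK' h) hza hza'
  have hnode : n ∉ Set.range r.node := by
    rintro ⟨v, rfl⟩
    refine hzv v (hp.subsingleton_chord_inter_chord hne haK haK' ⟨hza, hza'⟩ ⟨?_, ?_⟩)
    · simpa [r.label_node] using mem_chord (p ∘ r.label e) hn
    · simpa [r.label_node] using mem_chord (p ∘ r.label e') hn'
  obtain ⟨m, rfl⟩ := hn
  obtain ⟨m', rfl⟩ := hn'
  exact ⟨n, m, m', hnode, (r.path e).1.mem_edges_toSubgraph.2 ha,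
    (r.path e').1.mem_edges_toSubgraph.2 ha', hza, hza'⟩

theorem exists_injective_crossingSet {ι : ℝ × ℝ → unitSphere} (hinj : Function.Injective ι)
    {Dr : Drawing G} (hv : ∀ v, Dr.vmap v = ι (p (.inl v)))
    (harc : ∀ e : G.edgeSet, Set.range (Dr.arc e) = ι '' r.trace p e) (e : G.edgeSet) :
    ∃ f : crossingSet Dr e → Σ x : r.shared e, r.Pencil e x, Function.Injective f := by
  have key (q : crossingSet Dr e) : ∃ (c : Σ x : r.shared e, r.Pencil e x) (z : ℝ × ℝ),
      q = ((c.1.1.2 : Sym2 V), ι z) ∧ z ∈ chord (p ∘ r.label e) s(c.1.1.1, c.2.1) ∩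
        chord (p ∘ r.label c.1.1.2) s(c.1.1.1, c.2.2) := by
    obtain ⟨⟨e', _⟩, he', hne, hz, hz', hzv⟩ := q
    lift e' to G.edgeSet using he'
    dsimp only at hne hz hz' hzv
    rw [harc] at hz hz'
    obtain ⟨z, hmem, rfl⟩ := hz
    replace hz' := hinj.mem_set_image.1 hz'
    obtain ⟨n, m, m', hn, hm, hm', hchord⟩ := hp.exists_common_node
      (fun h ↦ hne (congrArg Subtype.val h.symm)) hmem hz' fun v h ↦ hzv ⟨v, by rw [hv, h]⟩
    exact ⟨⟨⟨(n, e'), hn, fun h ↦ hne (congrArg Subtype.val h),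
      (r.path e).1.mem_verts_toSubgraph.1 hm.fst_mem,
      (r.path e').1.mem_verts_toSubgraph.1 hm'.fst_mem⟩, ⟨m, hm⟩, ⟨m', hm'⟩⟩, z, rfl, hchord⟩
  choose f z hf hz using key
  refine ⟨f, fun q q' hq ↦ Subtype.ext ?_⟩
  have hz_eq : z q = z q' := hp.subsingleton_chord_inter_chord (f q).1.2.2.1.symm
    (f q).2.1.2.adj_sub (f q).2.2.2.adj_sub (hz q) (hq ▸ hz q')
  rw [hf, hf, hq, hz_eq]

end IsGeneric

theorem exists_drawing [Finite V] [Finite N] {pos : N → ℝ × ℝ} (hK : IsPlanarPlacement K pos) :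
    ∃ Dr : Drawing G, ∀ e : G.edgeSet, (crossingSet Dr e).Finite ∧
      (crossingSet Dr e).ncard ≤ 4 * (r.shared e).ncard := by
  obtain ⟨p, hp⟩ := r.exists_isGeneric hK
  obtain ⟨ι, hcont, hinj⟩ := exists_continuous_injective_unitSphere
  obtain ⟨Dr, hv, harc⟩ := hp.exists_drawing hcont hinj
  refine ⟨Dr, fun e ↦ ?_⟩
  obtain ⟨f, hf⟩ := hp.exists_injective_crossingSet hinj hv harc e
  exact ⟨Set.finite_coe_iff.1 (Finite.of_injective f hf),
    (Nat.card_le_card_of_injective f hf).trans (r.card_sigma_pencil_le e)⟩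

end Routing

/-! ### The triangulation of a plane graph -/

theorem iff_of_imp_of_injective {D : Type*} [Finite D] {f : D → D} (hf : Function.Injective f)
    {Q : D → Prop} (hQ : ∀ d, Q d → Q (f d)) (d : D) : Q d ↔ Q (f d) := by
  refine ⟨hQ d, fun h ↦ ?_⟩
  obtain ⟨d', hd', heq⟩ :=
    (((Set.toFinite {d | Q d}).injOn_iff_bijOn_of_mapsTo hQ).1 hf.injOn).surjOn h
  exact hf heq ▸ hd'

namespace RotationSystem

open SimpleGraph

variable {W : Type*} (R : RotationSystem W)

theorem edge_mem_incidentSet (d : R.G.Dart) : d.edge ∈ incidentSet R.G d.snd :=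
  ⟨d.edge_mem, Sym2.mem_mk_right _ _⟩

theorem fst_faceNext (d : R.G.Dart) : (R.faceNext d).fst = d.snd := rfl

theorem edge_faceNext (d : R.G.Dart) : (R.faceNext d).edge = R.rot d.snd d.edge :=
  Sym2.other_spec ((R.rot_cycleOn d.snd).1.mapsTo (R.edge_mem_incidentSet d)).2

variable {R} in
theorem dart_ext_of_snd {d d' : R.G.Dart} (h : d.snd = d'.snd) (he : d.edge = d'.edge) :
    d = d' := by
  rcases (dart_edge_eq_iff d d').1 he with rfl | rfl
  exacts [rfl, absurd h d'.fst_ne_snd]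

theorem faceNext_injective : Function.Injective R.faceNext := by
  intro d d' h
  have hsnd : d.snd = d'.snd := congrArg (fun d : R.G.Dart ↦ d.fst) h
  refine dart_ext_of_snd hsnd ((R.rot d'.snd).injective ?_)
  rw [← edge_faceNext, ← h, edge_faceNext, hsnd]

instance [Finite W] : Finite R.G.Dart := .of_injective _ Dart.toProd_injective

instance [Finite W] : Finite R.Face := Quot.finite _

/-- The permutation of the darts that walks around the faces. -/
noncomputable def facePerm [Finite W] : Equiv.Perm R.G.Dart :=
  .ofBijective R.faceNext (Finite.injective_iff_bijective.1 R.faceNext_injective)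

variable [Finite W]

theorem facePerm_apply (d : R.G.Dart) : R.facePerm d = R.faceNext d := rfl

/-- The face to the left of a dart. -/
def face (d : R.G.Dart) : R.Face := Quot.mk _ d

theorem face_facePerm (d : R.G.Dart) : R.face (R.facePerm d) = R.face d :=
  (Quot.sound (r := fun a b : R.G.Dart ↦ R.faceNext a = b) rfl).symm

theorem snd_facePerm_symm (d : R.G.Dart) : (R.facePerm.symm d).snd = d.fst := by
  rw [← fst_faceNext, ← facePerm_apply, Equiv.apply_symm_apply]

variable {R}

theorem of_face_eq {Q : R.G.Dart → Prop} (hQ : ∀ d, Q d → Q (R.facePerm.symm d))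
    {d d' : R.G.Dart} (h : R.face d = R.face d') (hd : Q d) : Q d' := by
  suffices Q d ↔ Q d' from this.1 hd
  have := Quot.eqvGen_exact h
  clear h hd
  induction this with
  | rel a b h =>
    have := iff_of_imp_of_injective R.facePerm.symm.injective hQ (R.facePerm a)
    rw [Equiv.symm_apply_apply] at this
    exact h ▸ this.symm
  | refl => rfl
  | symm _ _ _ ih => exact ih.symm
  | trans _ _ _ _ _ ih₁ ih₂ => exact ih₁.trans ih₂

theorem of_snd_eq {Q : R.G.Dart → Prop} (hQ : ∀ d, Q d → Q (R.facePerm d).symm) {d d' : R.G.Dart}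
    (h : d.snd = d'.snd) (hd : Q d) : Q d' := by
  obtain ⟨k, hk⟩ := ((R.rot_cycleOn d.snd).2 (R.edge_mem_incidentSet d)
    (h ▸ R.edge_mem_incidentSet d')).exists_nat_pow_eq
  obtain ⟨d'', hQ'', hsnd, hedge⟩ :
      ∃ d'', Q d'' ∧ d''.snd = d.snd ∧ d''.edge = (R.rot d.snd ^ k) d.edge := by
    clear hk
    induction k with
    | zero => exact ⟨d, hd, rfl, rfl⟩
    | succ k ih =>
      obtain ⟨d'', hQ'', hsnd, hedge⟩ := ih
      refine ⟨_, hQ _ hQ'', hsnd, ?_⟩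
      rw [Dart.edge_symm, facePerm_apply, edge_faceNext, hsnd, hedge, pow_succ',
        Equiv.Perm.mul_apply]
  exact dart_ext_of_snd (hsnd.trans h) (hedge.trans hk) ▸ hQ''

/-- The connected component containing a dart. -/
def component (d : R.G.Dart) : R.G.ConnectedComponent := R.G.connectedComponentMk d.fst

omit [Finite W] in
theorem component_eq_of_edge_eq {d d' : R.G.Dart} (h : d.edge = d'.edge) :
    component d = component d' := by
  rcases (dart_edge_eq_iff d d').1 h with rfl | rfl
  exacts [rfl, ConnectedComponent.sound d'.symm.adj.reachable]

theorem of_component_eq {Q : R.G.Dart → Prop} (hsymm : ∀ d, Q d → Q d.symm)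
    (hface : ∀ d, Q d → Q (R.facePerm d)) {d d' : R.G.Dart} (h : component d = component d')
    (hd : Q d) : Q d' := by
  have of_fst_eq {d d' : R.G.Dart} (h : d.fst = d'.fst) (hd : Q d) : Q d' := by
    simpa using hsymm _ (of_snd_eq (Q := Q) (fun d hd ↦ hsymm _ (hface d hd))
      (d := d.symm) (d' := d'.symm) h (hsymm _ hd))
  obtain ⟨w⟩ := ConnectedComponent.exact h
  suffices ∀ {u v} (_ : R.G.Walk u v) (d d' : R.G.Dart), d.fst = u → d'.fst = v → Q d → Q d' from
    this w d d' rfl rfl hd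
  intro u v w
  induction w with
  | nil => exact fun d d' h h' ↦ of_fst_eq (h.trans h'.symm)
  | @cons _ v _ hadj _ ih =>
    rintro d d' rfl h' hd
    let d₀ : R.G.Dart := ⟨(d.fst, v), hadj⟩
    exact ih d₀.symm d' rfl h' (hsymm d₀ (of_fst_eq (d := d) rfl hd))

end RotationSystem

/-- The position of a dart in one of the triangles at a corner: it leaves the centre of the corner,
runs along its rim, or returns to the centre. -/
inductive Side
  | out | rim | inn
  deriving DecidableEq

instance : Fintype Side := ⟨{.out, .rim, .inn}, fun s ↦ by cases s <;> decide⟩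

namespace RotationSystem

open SimpleGraph

variable {W : Type*} (R : RotationSystem W)

/-- The vertices of the triangulation of a plane graph: its vertices of positive degree, its edges,
its corners and its faces. The corner between a dart `d` and its successor `R.faceNext d` is
represented by `d`. -/
abbrev Cell : Type _ := {w : W // ∃ w', R.G.Adj w w'} ⊕ R.G.edgeSet ⊕ R.G.Dart ⊕ R.Face

/-- The darts of the triangulation: around each corner there are four triangles. -/
abbrev CornerDart : Type _ := Side × Fin 4 × R.G.Dart

variable [Finite W]

/-- The four cells around a corner: the vertex, the next edge, the face, and the previous edge. -/
noncomputable def rimCell : Fin 4 → R.G.Dart → R.Cell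
  | 0, d => .inl ⟨d.snd, d.fst, d.symm.adj⟩
  | 1, d => .inr (.inl ⟨(R.facePerm d).edge, (R.facePerm d).edge_mem⟩)
  | 2, d => .inr (.inr (.inr (R.face d)))
  | 3, d => .inr (.inl ⟨d.edge, d.edge_mem⟩)

/-- The reversal of darts. A rim dart also belongs to a neighbouring corner. -/
noncomputable def cornerRev : R.CornerDart → R.CornerDart
  | (.out, i, d) => (.inn, i - 1, d)
  | (.inn, i, d) => (.out, i + 1, d)
  | (.rim, 0, d) => (.rim, 3, (R.facePerm d).symm)
  | (.rim, 1, d) => (.rim, 2, R.facePerm d)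
  | (.rim, 2, d) => (.rim, 1, R.facePerm.symm d)
  | (.rim, 3, d) => (.rim, 0, R.facePerm.symm d.symm)

/-- The next dart of the same triangle. -/
def cornerNext : R.CornerDart → R.CornerDart
  | (.out, i, d) => (.rim, i, d)
  | (.rim, i, d) => (.inn, i, d)
  | (.inn, i, d) => (.out, i, d)

/-- The initial vertex of a dart of the triangulation. -/
noncomputable def cornerSrc : R.CornerDart → R.Cell
  | (.out, _, d) => .inr (.inr (.inl d))
  | (.rim, i, d) => R.rimCell i d
  | (.inn, i, d) => R.rimCell (i + 1) d

theorem cornerRev_cornerRev (z : R.CornerDart) : R.cornerRev (R.cornerRev z) = z := by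
  obtain ⟨_ | _ | _, i, d⟩ := z
  · simp [cornerRev]
  · fin_cases i <;> simp [cornerRev]
  · simp [cornerRev]

theorem cornerSrc_cornerNext (z : R.CornerDart) :
    R.cornerSrc (R.cornerNext z) = R.cornerSrc (R.cornerRev z) := by
  obtain ⟨_ | _ | _, i, d⟩ := z
  · simp [cornerRev, cornerNext, cornerSrc]
  · fin_cases i
    · simp [cornerRev, cornerNext, cornerSrc, rimCell]
    · exact congrArg (fun F ↦ Sum.inr (Sum.inr (Sum.inr F))) (R.face_facePerm d).symm
    · simp [cornerRev, cornerNext, cornerSrc, rimCell]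
    · simp [cornerRev, cornerNext, cornerSrc, rimCell, snd_facePerm_symm]
  · rfl

theorem cornerSrc_cornerRev_ne (z : R.CornerDart) :
    R.cornerSrc (R.cornerRev z) ≠ R.cornerSrc z := by
  obtain ⟨_ | _ | _, i, d⟩ := z <;> fin_cases i <;> simp [cornerRev, cornerSrc, rimCell]

theorem cornerSrc_surjective : Function.Surjective R.cornerSrc := by
  rintro (⟨w, w', hw⟩ | ⟨e, he⟩ | d | ⟨⟨d⟩⟩)
  · exact ⟨(.rim, 0, ⟨(w', w), hw.symm⟩), rfl⟩
  · induction e with | _ u v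
    exact ⟨(.rim, 3, ⟨(u, v), he⟩), rfl⟩
  · exact ⟨(.out, 0, d), rfl⟩
  · exact ⟨(.rim, 2, d), rfl⟩

variable {R}

theorem cornerNext_cornerRev_injective :
    Function.Injective (R.cornerNext ∘ R.cornerRev) := by
  have hnext : Function.Injective R.cornerNext :=
    Function.LeftInverse.injective (g := R.cornerNext ∘ R.cornerNext)
      (by rintro ⟨_ | _ | _, i, d⟩ <;> rfl)
  exact hnext.comp (Function.LeftInverse.injective R.cornerRev_cornerRev)

theorem exists_iff_cornerSrc {Q : R.CornerDart → Prop}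
    (hQ : ∀ z, Q z → Q (R.cornerNext (R.cornerRev z))) :
    ∃ P : R.Cell → Prop, ∀ z, Q z ↔ P (R.cornerSrc z) := by
  have turn (z) : Q z ↔ Q (R.cornerNext (R.cornerRev z)) :=
    iff_of_imp_of_injective cornerNext_cornerRev_injective hQ z
  have corner (i d) : Q (.out, i, d) ↔ Q (.out, 0, d) := by
    have h₁ : Q (.out, 1, d) ↔ Q (.out, 0, d) := turn (.out, 1, d)
    have h₂ : Q (.out, 2, d) ↔ Q (.out, 1, d) := turn (.out, 2, d)
    have h₃ : Q (.out, 0, d) ↔ Q (.out, 3, d) := turn (.out, 0, d)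
    fin_cases i
    exacts [Iff.rfl, h₁, h₂.trans h₁, h₃.symm]
  have inn (i d) : Q (.inn, i, d) ↔ Q (.rim, i + 1, d) := turn (.inn, i, d)
  have vertex (d) (hd : Q (.rim, 0, d)) : Q (.rim, 0, (R.facePerm d).symm) :=
    (inn 3 _).1 ((turn (.rim, 0, d)).1 hd)
  have edge_next (d) : Q (.rim, 1, d) ↔ Q (.rim, 3, R.facePerm d) :=
    (turn (.rim, 1, d)).trans (inn 2 _)
  have edge_symm (d) (hd : Q (.rim, 3, d)) : Q (.rim, 3, d.symm) := by
    have h : Q (.rim, 1, R.facePerm.symm d.symm) := (inn 0 _).1 ((turn (.rim, 3, d)).1 hd)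
    rwa [edge_next, Equiv.apply_symm_apply] at h
  have face (d) (hd : Q (.rim, 2, d)) : Q (.rim, 2, R.facePerm.symm d) :=
    (inn 1 _).1 ((turn (.rim, 2, d)).1 hd)
  let P : R.Cell → Prop := Sum.elim (fun w ↦ ∃ d, d.snd = w.1 ∧ Q (.rim, 0, d)) <|
    Sum.elim (fun e ↦ ∃ d, d.edge = e.1 ∧ Q (.rim, 3, d)) <|
    Sum.elim (fun d ↦ Q (.out, 0, d)) fun F ↦ ∃ d, R.face d = F ∧ Q (.rim, 2, d)
  have prev (d) : Q (.rim, 3, d) ↔ P (R.rimCell 3 d) := by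
    refine ⟨fun h ↦ ⟨d, rfl, h⟩, fun ⟨d', h', hd⟩ ↦ ?_⟩
    rcases (dart_edge_eq_iff d' d).1 h' with rfl | rfl
    exacts [hd, d.symm_symm ▸ edge_symm _ hd]
  have rim (i d) : Q (.rim, i, d) ↔ P (R.rimCell i d) := by
    fin_cases i
    · exact ⟨fun h ↦ ⟨d, rfl, h⟩, fun ⟨d', h', hd⟩ ↦ of_snd_eq vertex h' hd⟩
    · exact (edge_next d).trans (prev _)
    · exact ⟨fun h ↦ ⟨d, rfl, h⟩, fun ⟨d', h', hd⟩ ↦ of_face_eq face h' hd⟩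
    · exact prev d
  refine ⟨P, ?_⟩
  rintro ⟨_ | _ | _, i, d⟩
  exacts [corner i d, rim i d, (inn i d).trans (rim _ d)]

theorem cornerDart_induction {Q : R.CornerDart → Prop} (hnext : ∀ z, Q z → Q (R.cornerNext z))
    (hrev : ∀ z, Q z → Q (R.cornerRev z)) {B : Set R.G.Dart}
    (hB : ∀ d, ∃ b ∈ B, component b = component d) (hbase : ∀ b ∈ B, Q (.rim, 3, b))
    (z : R.CornerDart) : Q z := by
  have triangle (i d s s') (h : Q (s, i, d)) : Q (s', i, d) := by
    have h₁ := hnext _ h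
    have h₂ := hnext _ h₁
    cases s <;> cases s' <;> assumption
  have spoke (i d) (h : Q (.rim, i, d)) : Q (.rim, i + 1, d) :=
    triangle _ _ .out _ (hrev _ (triangle _ _ _ .inn h))
  have corner (d) (h : Q (.rim, 3, d)) (i) : Q (.rim, i, d) := by
    have h₀ := spoke 3 d h
    have h₁ := spoke 0 d h₀
    have h₂ := spoke 1 d h₁
    fin_cases i <;> assumption
  have hface (d) (h : Q (.rim, 3, d)) : Q (.rim, 3, R.facePerm d) :=
    spoke 2 _ (hrev _ (corner d h 1))
  have hsymm (d) (h : Q (.rim, 3, d)) : Q (.rim, 3, d.symm) := by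
    have h₀ : Q (.rim, 0, R.facePerm.symm d.symm) := hrev _ h
    simpa using hface _ (spoke 2 _ (spoke 1 _ (spoke 0 _ h₀)))
  obtain ⟨s, i, d⟩ := z
  obtain ⟨b, hb, hbd⟩ := hB d
  exact triangle i d .rim s
    (corner d (of_component_eq (Q := fun d ↦ Q (.rim, 3, d)) hsymm hface hbd (hbase b hb)) i)

end RotationSystem

namespace RotationSystem

open SimpleGraph

variable {W : Type*} {R : RotationSystem W}

theorem compl_range_component :
    (Set.range (component (R := R)))ᶜ =
      R.G.connectedComponentMk '' {v : W | ∀ w, ¬ R.G.Adj v w} := by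
  ext c
  induction c using ConnectedComponent.ind with | _ v
  simp only [Set.mem_compl_iff, Set.mem_range, Set.mem_image, Set.mem_ofPred_eq]
  constructor
  · exact fun h ↦ ⟨v, fun w hw ↦ h ⟨⟨(v, w), hw⟩, rfl⟩, rfl⟩
  · rintro ⟨u, hu, huv⟩ ⟨d, hd⟩
    obtain ⟨_ | ⟨h, _⟩⟩ := ConnectedComponent.exact (huv.trans hd.symm)
    exacts [hu _ d.adj, hu _ h]

variable [Finite W]

theorem card_connectedComponent :
    Nat.card R.G.ConnectedComponent =
      (Set.range (component (R := R))).ncard + Nat.card {v : W | ∀ w, ¬ R.G.Adj v w} := by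
  have hinj : Set.InjOn R.G.connectedComponentMk {v : W | ∀ w, ¬ R.G.Adj v w} := by
    intro u hu v _ huv
    obtain ⟨_ | ⟨h, _⟩⟩ := ConnectedComponent.exact huv
    exacts [rfl, absurd h (hu _)]
  rw [← Set.ncard_add_ncard_compl (Set.range component), compl_range_component,
    hinj.ncard_image, Nat.card_coe_set_eq]

theorem card_dart : Nat.card R.G.Dart = 2 * Nat.card R.G.edgeSet := by
  classical
  have := Fintype.ofFinite W
  rw [Nat.card_eq_fintype_card, R.G.dart_card_eq_twice_card_edges, Nat.card_coe_set_eq,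
    ← coe_edgeFinset, Set.ncard_coe_finset]

theorem card_nonisolated_add_card_isolated :
    Nat.card {w : W // ∃ w', R.G.Adj w w'} + Nat.card {v : W | ∀ w, ¬ R.G.Adj v w} =
      Nat.card W := by
  have h := Set.ncard_add_ncard_compl {w : W | ∃ w', R.G.Adj w w'}
  simpa only [Set.compl_ofPred, not_exists, ← Nat.card_coe_set_eq, Set.coe_ofPred] using h

theorem IsPlane.euler_corner (hR : R.IsPlane) :
    6 * Nat.card R.Cell = Nat.card R.CornerDart + 12 * (Set.range (component (R := R))).ncard := by
  have hplane : Nat.card W + Nat.card R.Face + Nat.card {v : W | ∀ w, ¬ R.G.Adj v w} =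
    Nat.card R.G.edgeSet + 2 * Nat.card R.G.ConnectedComponent := hR
  have hcell : Nat.card R.Cell = Nat.card {w : W // ∃ w', R.G.Adj w w'} +
      (Nat.card R.G.edgeSet + (Nat.card R.G.Dart + Nat.card R.Face)) := by
    simp only [Nat.card_sum]
  have hside : Nat.card Side = 3 := by rw [Nat.card_eq_fintype_card]; rfl
  have hcorner : Nat.card R.CornerDart = 3 * (4 * Nat.card R.G.Dart) := by
    simp only [Nat.card_prod, hside, Nat.card_fin]
  have hvertex := card_nonisolated_add_card_isolated (R := R)
  have hcomponent := card_connectedComponent (R := R)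
  have hdart := card_dart (R := R)
  omega

/-- The triangulation of the sphere, or of a union of spheres, by the corners of a plane graph. Its
base darts lead from an edge to the end of a chosen dart in each component. -/
noncomputable def IsPlane.triangulation (hR : R.IsPlane) [Fintype R.CornerDart] [Fintype R.Cell]
    {B : Finset R.G.Dart} (hB : Set.BijOn component (B : Set R.G.Dart) (Set.range component)) :
    SphereTriangulation R.CornerDart R.Cell where
  rev := R.cornerRev
  nxt := R.cornerNext
  src := R.cornerSrc
  base := B.map ⟨fun b ↦ (.rim, 3, b), fun b b' h ↦ by simpa using h⟩
  rev_rev := R.cornerRev_cornerRev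
  nxt_nxt_nxt := by rintro ⟨_ | _ | _, i, d⟩ <;> rfl
  src_nxt_eq := R.cornerSrc_cornerNext
  src_rev_ne := R.cornerSrc_cornerRev_ne
  src_surjective := R.cornerSrc_surjective
  rotation_induction Q hQ d d' h hd := by
    obtain ⟨P, hP⟩ := exists_iff_cornerSrc hQ
    exact (hP d').2 (h ▸ (hP d).1 hd)
  dart_induction Q hnext hrev hbase := cornerDart_induction hnext hrev
    (fun d ↦ hB.surjOn ⟨d, rfl⟩) fun b hb ↦ hbase _ (Finset.mem_map_of_mem _ hb)
  base_src_injOn := by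
    rw [Finset.coe_map]
    rintro _ ⟨b, hb, rfl⟩ _ ⟨b', hb', rfl⟩ h
    have h : b.edge = b'.edge := congrArg Subtype.val (Sum.inl.inj (Sum.inr.inj h))
    rw [hB.injOn hb hb' (component_eq_of_edge_eq h)]
  base_tgt_injOn := by
    rw [Finset.coe_map]
    rintro _ ⟨b, hb, rfl⟩ _ ⟨b', hb', rfl⟩ h
    have h : (R.facePerm.symm b.symm).snd = (R.facePerm.symm b'.symm).snd :=
      congrArg Subtype.val (Sum.inl.inj h)
    rw [snd_facePerm_symm, snd_facePerm_symm] at h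
    have hcomp : component b.symm = component b'.symm := congrArg R.G.connectedComponentMk h
    rw [component_eq_of_edge_eq b.edge_symm, component_eq_of_edge_eq b'.edge_symm] at hcomp
    rw [hB.injOn hb hb' hcomp]
  base_src_ne_tgt := by
    simp [cornerRev, cornerSrc, rimCell]
  euler := by
    rw [Finset.card_map, ← Set.ncard_coe_finset, ← hB.injOn.ncard_image, hB.image_eq,
      ← Nat.card_eq_fintype_card, ← Nat.card_eq_fintype_card]
    exact hR.euler_corner

end RotationSystem

/-! ### Nets -/

open SimpleGraph

namespace SphereTriangulation

variable {D X Y : Type*} [Fintype D] [Fintype X] (T : SphereTriangulation D X) (f : X → Y) (d : D)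

theorem subdivision_adj_inl_inr : (T.subdivision f).Adj (.inl (f (T.src d))) (.inr d) :=
  (fromEdgeSet_adj _).2 ⟨.inl ⟨d, rfl⟩, Sum.inl_ne_inr⟩

theorem subdivision_adj_inr_inr : (T.subdivision f).Adj (.inr d) (.inr (T.rev d)) :=
  (fromEdgeSet_adj _).2 ⟨.inr ⟨d, rfl⟩, fun h ↦ T.src_rev_ne d (by rw [← Sum.inr.inj h])⟩

theorem not_subdivision_adj_inl_inl (y y' : Y) :
    ¬(T.subdivision f).Adj (.inl y) (.inl y') := by
  simp [subdivision]

/-- The walk along a subdivided edge. -/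
def subdivisionWalk : (T.subdivision f).Walk (.inl (f (T.src d))) (.inl (f (T.tgt d))) :=
  .cons (T.subdivision_adj_inl_inr f d) <| .cons (T.subdivision_adj_inr_inr f d) <|
    .cons (T.subdivision_adj_inl_inr f (T.rev d)).symm .nil

end SphereTriangulation

variable {V W N : Type*}

/-- A net for the plane graph `R`: a graph `K` in which the vertices of `R` are represented by
nodes, and the edges of `R` by disjoint sets of further nodes with a distinguished centre each.
The further node `n` belongs to the edge `owner n`. There are short walks from the centre of an edge
to its ends and to the centres of the attached edges. -/
structure Net (R : RotationSystem W) (K : SimpleGraph N) where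
  node : W → N
  center : Sym2 W → N
  owner : N → Sym2 W
  node_injective : Function.Injective node
  not_adj : ∀ v w, ¬K.Adj (node v) (node w)
  center_notMem_range : ∀ e, center e ∉ Set.range node
  owner_center : ∀ e, owner (center e) = e
  exists_walk_node : ∀ x, ∀ e ∈ incidentSet R.G x, ∃ p : K.Walk (center e) (node x),
    p.length ≤ 3 ∧ ∀ n ∈ p.support, n = node x ∨ n ∉ Set.range node ∧ owner n = e
  exists_walk_center : ∀ e e', Attached R e e' → ∃ p : K.Walk (center e) (center e'),
    p.length ≤ 6 ∧ ∀ n ∈ p.support, n ∉ Set.range node ∧ (owner n = e ∨ owner n = e')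

namespace RotationSystem

variable {R : RotationSystem W}

theorem exists_dart_of_mem_incidentSet {v : W} {e : Sym2 W} (he : e ∈ incidentSet R.G v) :
    ∃ d : R.G.Dart, d.snd = v ∧ d.edge = e := by
  obtain ⟨he, hv⟩ := he
  obtain ⟨u, rfl⟩ := hv
  exact ⟨⟨(u, v), he.symm⟩, rfl, Sym2.eq_swap⟩

variable (R) in
/-- The nodes of the net: the cells, extended to all vertices and all pairs of vertices, and the
subdivision vertices next to the cells. -/
abbrev NetNode : Type _ := (W ⊕ Sym2 W ⊕ R.G.Dart ⊕ R.Face) ⊕ R.CornerDart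

variable (R) in
/-- The inclusion of the cells into the nodes of the net. -/
def ofCell : R.Cell → W ⊕ Sym2 W ⊕ R.G.Dart ⊕ R.Face :=
  Sum.map Subtype.val (Sum.map Subtype.val id)

theorem ofCell_injective : Function.Injective R.ofCell :=
  Subtype.val_injective.sumMap (Subtype.val_injective.sumMap Function.injective_id)

variable [Finite W]

variable (R) in
/-- The edge owning a node of the net. Only the nodes on the walks from the centres of the edges
matter; a node of another kind has an arbitrary owner. -/
noncomputable def nodeOwner : R.NetNode → Sym2 W
  | .inl (.inl w) => s(w, w)
  | .inl (.inr (.inl e)) => e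
  | .inl (.inr (.inr (.inl d))) => d.edge
  | .inl (.inr (.inr (.inr F))) => (Quot.out F).edge
  | .inr (.rim, 0, d) => (R.facePerm d).edge
  | .inr (_, _, d) => d.edge

section Triangulation

variable [Fintype R.CornerDart] [Fintype R.Cell] {B : Finset R.G.Dart}
  (hR : R.IsPlane) (hB : Set.BijOn component (B : Set R.G.Dart) (Set.range component))

theorem exists_walk_edge_vertex (d : R.G.Dart) :
    ∃ p : ((hR.triangulation hB).subdivision R.ofCell).Walk (.inl (.inr (.inl d.edge)))
      (.inl (.inl d.snd)), p.length ≤ 3 ∧ ∀ n ∈ p.support,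
        n = .inl (.inl d.snd) ∨ n ∉ Set.range (fun w ↦ .inl (.inl w)) ∧ R.nodeOwner n = d.edge := by
  have hsnd : (R.facePerm.symm d.symm).snd = d.snd := R.snd_facePerm_symm _
  rw [← hsnd]
  refine ⟨(hR.triangulation hB).subdivisionWalk R.ofCell (.rim, 3, d), le_rfl, fun n hn ↦ ?_⟩
  replace hn : n ∈ [.inl (.inr (.inl d.edge)), .inr (.rim, 3, d),
    .inr (.rim, 0, R.facePerm.symm d.symm), .inl (.inl (R.facePerm.symm d.symm).snd)] := hn
  simp only [List.mem_cons, List.not_mem_nil, or_false] at hn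
  rcases hn with rfl | rfl | rfl | rfl <;> simp [nodeOwner]

theorem exists_walk_edge_edge (d : R.G.Dart) :
    ∃ p : ((hR.triangulation hB).subdivision R.ofCell).Walk (.inl (.inr (.inl d.edge)))
      (.inl (.inr (.inl (R.facePerm d).edge))), p.length ≤ 6 ∧ ∀ n ∈ p.support,
        n ∉ Set.range (fun w ↦ .inl (.inl w)) ∧
          (R.nodeOwner n = d.edge ∨ R.nodeOwner n = (R.facePerm d).edge) := by
  let T := hR.triangulation hB
  let p : (T.subdivision R.ofCell).Walk (.inl (.inr (.inl d.edge)))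
    (.inl (.inr (.inr (.inl d)))) := T.subdivisionWalk R.ofCell (.inn, 2, d)
  let q : (T.subdivision R.ofCell).Walk (.inl (.inr (.inr (.inl d))))
    (.inl (.inr (.inl (R.facePerm d).edge))) := T.subdivisionWalk R.ofCell (.out, 1, d)
  refine ⟨p.append q, (p.length_append q).le, fun n hn ↦ ?_⟩
  replace hn : n ∈ [.inl (.inr (.inl d.edge)), .inr (.inn, 2, d), .inr (.out, 3, d),
    .inl (.inr (.inr (.inl d))), .inr (.out, 1, d), .inr (.inn, 0, d),
    .inl (.inr (.inl (R.facePerm d).edge))] := hn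
  simp only [List.mem_cons, List.not_mem_nil, or_false] at hn
  rcases hn with rfl | rfl | rfl | rfl | rfl | rfl | rfl <;> simp [nodeOwner]

theorem exists_walk_edge_rot {v : W} {e : Sym2 W} (he : e ∈ incidentSet R.G v) :
    ∃ p : ((hR.triangulation hB).subdivision R.ofCell).Walk (.inl (.inr (.inl e)))
      (.inl (.inr (.inl (R.rot v e)))), p.length ≤ 6 ∧ ∀ n ∈ p.support,
        n ∉ Set.range (fun w ↦ .inl (.inl w)) ∧
          (R.nodeOwner n = e ∨ R.nodeOwner n = R.rot v e) := by
  obtain ⟨d, rfl, rfl⟩ := exists_dart_of_mem_incidentSet he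
  rw [← edge_faceNext]
  exact exists_walk_edge_edge hR hB d

/-- The net of a plane graph. -/
noncomputable def IsPlane.net : Net R ((hR.triangulation hB).subdivision R.ofCell) where
  node w := .inl (.inl w)
  center e := .inl (.inr (.inl e))
  owner := R.nodeOwner
  node_injective := Sum.inl_injective.comp Sum.inl_injective
  not_adj _ _ := SphereTriangulation.not_subdivision_adj_inl_inl _ _ _ _
  center_notMem_range _ := by simp
  owner_center _ := rfl
  exists_walk_node x e he := by
    obtain ⟨d, rfl, rfl⟩ := exists_dart_of_mem_incidentSet he
    exact exists_walk_edge_vertex hR hB d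
  exists_walk_center e e' := by
    rintro ⟨v, he, he', rfl | rfl⟩
    · exact exists_walk_edge_rot hR hB he
    · obtain ⟨p, hlen, hp⟩ := exists_walk_edge_rot hR hB he'
      refine ⟨p.reverse, p.length_reverse.trans_le hlen, fun n hn ↦ ?_⟩
      exact (hp n (by simpa using hn)).imp_right Or.symm

end Triangulation

theorem IsPlane.exists_net (hR : R.IsPlane) :
    ∃ (K : SimpleGraph R.NetNode) (pos : R.NetNode → ℝ × ℝ),
      IsPlanarPlacement K pos ∧ Nonempty (Net R K) := by
  have := Fintype.ofFinite R.CornerDart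
  have := Fintype.ofFinite R.Cell
  obtain ⟨B, -, hB⟩ := Set.exists_subset_bijOn Set.univ (component (R := R))
  rw [Set.image_univ, ← (Set.toFinite B).coe_toFinset] at hB
  obtain ⟨pos, hpos⟩ := (hR.triangulation hB).exists_isPlanarPlacement_subdivision ofCell_injective
  exact ⟨_, pos, hpos, ⟨hR.net hB⟩⟩

end RotationSystem

/-! ### Routing along wall-by-wall walks -/

variable {R : RotationSystem W} {K : SimpleGraph N}

theorem Attached.symm {e e' : Sym2 W} (h : Attached R e e') : Attached R e' e := by
  obtain ⟨v, he, he', h⟩ := h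
  exact ⟨v, he', he, h.symm⟩

theorem IsWbwWalkFromTo.reverse {x y : W} {L : List (Sym2 W)} (h : IsWbwWalkFromTo R x y L) :
    IsWbwWalkFromTo R y x L.reverse := by
  obtain ⟨⟨hne, hnodup, hedge, hchain⟩, hx, hy⟩ := h
  refine ⟨⟨List.reverse_ne_nil_iff.2 hne, List.nodup_reverse.2 hnodup, ?_, ?_⟩, ?_, ?_⟩
  · simpa only [List.mem_reverse] using hedge
  · exact List.isChain_reverse.2 (hchain.imp fun _ _ ↦ Attached.symm)
  · simpa only [List.head?_reverse] using hy
  · simpa only [List.getLast?_reverse] using hx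

theorem exists_isWbwWalkFromTo_of_wbwDist_le {x y : W} {l : ℕ} (h : wbwDist R x y ≤ l) :
    ∃ L, IsWbwWalkFromTo R x y L ∧ L.length ≤ l := by
  have hne : {n : ℕ∞ | ∃ L, IsWbwWalkFromTo R x y L ∧ (L.length : ℕ∞) = n}.Nonempty := by
    by_contra hempty
    rw [wbwDist, Set.not_nonempty_iff_eq_empty.1 hempty, sInf_empty] at h
    exact ENat.natCast_ne_top l (top_le_iff.1 h)
  obtain ⟨L, hL, hlen⟩ := csInf_mem hne
  exact ⟨L, hL, Nat.cast_le.1 (hlen.trans_le h)⟩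

theorem exists_isWbwWalkFromTo_of_power_adj {x y : W} {l : ℕ} (h : (R.power l).Adj x y) :
    ∃ L, IsWbwWalkFromTo R x y L ∧ (L.length ≤ l ∨ L = [s(x, y)]) := by
  rcases h with h | ⟨-, h | h⟩
  · exact ⟨[s(x, y)], ⟨⟨by simp, by simp, by simpa using h, List.isChain_singleton _⟩,
      ⟨_, rfl, Sym2.mem_mk_left x y⟩, ⟨_, rfl, Sym2.mem_mk_right x y⟩⟩, .inr rfl⟩
  · obtain ⟨L, hL, hlen⟩ := exists_isWbwWalkFromTo_of_wbwDist_le h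
    exact ⟨L, hL, .inl hlen⟩
  · obtain ⟨L, hL, hlen⟩ := exists_isWbwWalkFromTo_of_wbwDist_le h
    exact ⟨L.reverse, hL.reverse, .inl (by simpa using hlen)⟩

namespace Net

variable (net : Net R K)

theorem exists_walk_of_isChain {g g' : Sym2 W} {L : List (Sym2 W)}
    (hL : (g :: L).IsChain (Attached R)) (hg' : (g :: L).getLast? = some g') :
    ∃ p : K.Walk (net.center g) (net.center g'), p.length ≤ 6 * L.length ∧
      ∀ n ∈ p.support, n ∉ Set.range net.node ∧ net.owner n ∈ g :: L := by
  induction L generalizing g with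
  | nil =>
    obtain rfl : g = g' := by simpa using hg'
    refine ⟨.nil, Nat.zero_le _, fun n hn ↦ ?_⟩
    obtain rfl : n = net.center g := by simpa using hn
    exact ⟨net.center_notMem_range g, by simp [net.owner_center]⟩
  | cons h L ih =>
    rw [List.isChain_cons_cons] at hL
    obtain ⟨p, hplen, hp⟩ := net.exists_walk_center g h hL.1
    obtain ⟨q, hqlen, hq⟩ := ih hL.2 (by rwa [List.getLast?_cons_cons] at hg')
    refine ⟨p.append q, ?_, fun n hn ↦ ?_⟩
    · rw [Walk.length_append, List.length_cons]
      omega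
    · rcases (Walk.mem_support_append_iff _ _).1 hn with hn | hn
      · refine (hp n hn).imp_right ?_
        rintro (h | h) <;> simp [h]
      · exact (hq n hn).imp_right (List.mem_cons_of_mem g)

theorem exists_path_of_isWbwWalkFromTo {x y : W} {L : List (Sym2 W)}
    (hL : IsWbwWalkFromTo R x y L) :
    ∃ p : K.Path (net.node x) (net.node y), p.1.length ≤ 6 * L.length ∧
      ∀ n ∈ p.1.support, n = net.node x ∨ n = net.node y ∨
        n ∉ Set.range net.node ∧ net.owner n ∈ L := by
  classical
  obtain ⟨⟨hne, -, hedge, hchain⟩, ⟨g, hg, hxg⟩, ⟨g', hg', hyg'⟩⟩ := hL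
  obtain ⟨L, rfl⟩ := List.head?_eq_some_iff.1 hg
  have hg'L : g' ∈ g :: L := List.mem_of_getLast? hg'
  obtain ⟨p, hplen, hp⟩ := net.exists_walk_of_isChain hchain hg'
  obtain ⟨a, halen, ha⟩ := net.exists_walk_node x g ⟨hedge g List.mem_cons_self, hxg⟩
  obtain ⟨b, hblen, hb⟩ := net.exists_walk_node y g' ⟨hedge g' hg'L, hyg'⟩
  let w := (a.reverse.append p).append b
  have hwlen : w.length ≤ 6 * (g :: L).length := by
    simp only [w, Walk.length_append, Walk.length_reverse, List.length_cons]
    omega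
  refine ⟨w.toPath, w.length_bypass_le_length.trans hwlen, fun n hn ↦ ?_⟩
  replace hn := w.support_bypass_subset_support hn
  simp only [w, Walk.mem_support_append_iff, Walk.support_reverse, List.mem_reverse] at hn
  rcases hn with (hn | hn) | hn
  · exact (ha n hn).imp_right fun ⟨hn, h⟩ ↦ .inr ⟨hn, h ▸ List.mem_cons_self⟩
  · exact .inr (.inr (hp n hn))
  · exact .inr ((hb n hn).imp_right fun ⟨hn, h⟩ ↦ ⟨hn, h ▸ hg'L⟩)

theorem exists_routing {G : SimpleGraph V} {τ : V → W} (hτ : Function.Injective τ)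
    {L : G.edgeSet → List (Sym2 W)} (hL : ∀ e : G.edgeSet,
      IsWbwWalkFromTo R (τ (Quot.out (e : Sym2 V)).1) (τ (Quot.out (e : Sym2 V)).2) (L e)) :
    ∃ r : Routing G K, ∀ e, (r.path e).1.length ≤ 6 * (L e).length ∧
      ∀ n ∈ (r.path e).1.support, n ∉ Set.range r.node → net.owner n ∈ L e := by
  choose p hlen hp using fun e ↦ net.exists_path_of_isWbwWalkFromTo (hL e)
  have hends (e : G.edgeSet) : s((Quot.out (e : Sym2 V)).1, (Quot.out (e : Sym2 V)).2) = e :=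
    Quot.out_eq (e : Sym2 V)
  let r : Routing G K :=
    { node := net.node ∘ τ
      node_injective := net.node_injective.comp hτ
      not_adj := fun _ _ ↦ net.not_adj _ _
      path := p
      mem_of_node_mem := fun e v hv ↦ by
        rw [← hends, Sym2.mem_iff]
        rcases hp e _ hv with h | h | h
        · exact .inl (hτ (net.node_injective h))
        · exact .inr (hτ (net.node_injective h))
        · exact absurd ⟨τ v, rfl⟩ h.1 }
  refine ⟨r, fun e ↦ ⟨hlen e, fun n hn hrange ↦ ?_⟩⟩
  rcases hp e n hn with rfl | rfl | h
  exacts [absurd ⟨_, rfl⟩ hrange, absurd ⟨_, rfl⟩ hrange, h.2]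

end Net

/-! ### Counting the crossings -/

theorem exists_finset_of_isChain_cons {α : Type*} {r : α → α → Prop} {m : ℕ}
    (hr : ∀ a, ∃ S : Finset α, S.card ≤ m ∧ a ∈ S ∧ ∀ b, r a b → b ∈ S) (k : ℕ) (a : α) :
    ∃ S : Finset α, S.card ≤ m ^ k ∧
      ∀ L, (a :: L).IsChain r → L.length ≤ k → ∀ b ∈ a :: L, b ∈ S := by
  classical
  induction k generalizing a with
  | zero =>
    refine ⟨{a}, (Finset.card_singleton a).le, fun L _ hL b hb ↦ ?_⟩
    rwa [List.length_eq_zero_iff.1 (Nat.le_zero.1 hL), List.mem_singleton,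
      ← Finset.mem_singleton] at hb
  | succ k ih =>
    choose ball hcard hball using ih
    obtain ⟨S, hS, ha, hSr⟩ := hr a
    refine ⟨S.biUnion ball, ?_, fun L hL hlen b hb ↦ Finset.mem_biUnion.2 ?_⟩
    · calc (S.biUnion ball).card ≤ S.card * m ^ k :=
            Finset.card_biUnion_le_card_mul _ _ _ fun c _ ↦ hcard c
        _ ≤ m * m ^ k := Nat.mul_le_mul_right _ hS
        _ = m ^ (k + 1) := (pow_succ' m k).symm
    · rcases L with _ | ⟨c, L⟩
      · obtain rfl := List.mem_singleton.1 hb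
        exact ⟨b, ha, hball b [] hL (Nat.zero_le k) b hb⟩
      rw [List.isChain_cons_cons] at hL
      rcases List.mem_cons.1 hb with rfl | hb
      · exact ⟨b, ha, hball b [] (List.isChain_singleton b) (Nat.zero_le k) b List.mem_cons_self⟩
      · exact ⟨c, hSr c hL.1, hball c L hL.2 (Nat.le_of_succ_le_succ hlen) b hb⟩

theorem exists_finset_of_isChain {α : Type*} {r : α → α → Prop} (hsymm : ∀ a b, r a b → r b a)
    {m : ℕ} (hr : ∀ a, ∃ S : Finset α, S.card ≤ m ∧ a ∈ S ∧ ∀ b, r a b → b ∈ S) (k : ℕ) (a : α) :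
    ∃ S : Finset α, S.card ≤ m ^ k ∧
      ∀ L : List α, L.IsChain r → L.length ≤ k + 1 → a ∈ L → ∀ b ∈ L, b ∈ S := by
  obtain ⟨S, hS, hball⟩ := exists_finset_of_isChain_cons hr k a
  refine ⟨S, hS, fun L hL hlen ha b hb ↦ ?_⟩
  obtain ⟨A, B, rfl⟩ := List.append_of_mem ha
  rw [List.length_append, List.length_cons] at hlen
  rcases List.mem_append.1 hb with hb | hb
  · refine hball A.reverse ?_ (by rw [List.length_reverse]; omega) b (by simp [hb])
    rw [List.append_cons] at hL
    rw [← List.reverse_concat, List.isChain_reverse]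
    exact (List.isChain_append.1 hL).1.imp hsymm
  · exact hball B (List.isChain_append.1 hL).2.1 (by omega) b hb

theorem exists_finset_attached (R : RotationSystem W) (e : Sym2 W) :
    ∃ S : Finset (Sym2 W), S.card ≤ 5 ∧ e ∈ S ∧ ∀ e', Attached R e e' → e' ∈ S := by
  classical
  induction e with | _ a b
  refine ⟨{s(a, b), R.rot a s(a, b), R.rot b s(a, b), (R.rot a).symm s(a, b),
    (R.rot b).symm s(a, b)}, Finset.card_le_five, by simp, ?_⟩
  rintro e' ⟨v, hv, -, rfl | h⟩
  · rcases Sym2.mem_iff.1 hv.2 with rfl | rfl <;> simp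
  · rw [← Equiv.eq_symm_apply] at h
    rcases Sym2.mem_iff.1 hv.2 with rfl | rfl <;> simp [h]

theorem exists_finset_sym2 [Finite V] {τ : V → W} (hτ : Function.Injective τ)
    (S : Finset (Sym2 W)) : ∃ T : Finset (Sym2 V), T.card ≤ 4 * S.card ^ 2 ∧
      ∀ e : Sym2 V, (∀ v ∈ e, ∃ g ∈ S, τ v ∈ g) → e ∈ T := by
  classical
  have := Fintype.ofFinite V
  let U : Finset V := {v | ∃ g ∈ S, τ v ∈ g}
  have hU : U.card ≤ S.card * 2 := by
    rw [← Finset.card_image_of_injective U hτ]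
    have hsub : U.image τ ⊆ S.biUnion Sym2.toFinset := by
      intro x hx
      obtain ⟨v, hv, rfl⟩ := Finset.mem_image.1 hx
      simpa [U] using hv
    refine (Finset.card_le_card hsub).trans (Finset.card_biUnion_le_card_mul _ _ _ fun g _ ↦ ?_)
    rw [Sym2.card_toFinset]
    split_ifs <;> omega
  refine ⟨U.sym2, ?_, fun e he ↦ Finset.mem_sym2_iff.2 fun v hv ↦ by simpa [U] using he v hv⟩
  calc U.sym2.card ≤ U.card ^ 2 := by
        rw [Finset.card_sym2, Nat.choose_two_right, Nat.add_sub_cancel]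
        rcases U.card.eq_zero_or_pos with h | h
        · simp [h]
        · exact Nat.div_le_of_le_mul (by nlinarith)
    _ ≤ (S.card * 2) ^ 2 := Nat.pow_le_pow_left hU 2
    _ = 4 * S.card ^ 2 := by ring

theorem ncard_setOf_mem_wbwWalk_le [Finite V] {G : SimpleGraph V} {τ : V → W}
    (hτ : Function.Injective τ) {L : G.edgeSet → List (Sym2 W)} (hL : ∀ e : G.edgeSet,
      IsWbwWalkFromTo R (τ (Quot.out (e : Sym2 V)).1) (τ (Quot.out (e : Sym2 V)).2) (L e))
    {k : ℕ} (hlen : ∀ e, (L e).length ≤ k + 1) (h : Sym2 W) :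
    {e | h ∈ L e}.ncard ≤ 4 * 25 ^ k := by
  obtain ⟨S, hS, hball⟩ :=
    exists_finset_of_isChain (fun _ _ ↦ Attached.symm) (exists_finset_attached R) k h
  obtain ⟨T, hT, hmem⟩ := exists_finset_sym2 hτ S
  have hsub : Subtype.val '' {e | h ∈ L e} ⊆ (T : Set (Sym2 V)) := by
    rintro _ ⟨e, he, rfl⟩
    obtain ⟨⟨-, -, -, hchain⟩, ⟨g, hg, hxg⟩, ⟨g', hg', hyg'⟩⟩ := hL e
    have hLS := hball (L e) hchain (hlen e) he
    refine hmem e fun v hv ↦ ?_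
    have hends : s((Quot.out (e : Sym2 V)).1, (Quot.out (e : Sym2 V)).2) = e :=
      Quot.out_eq (e : Sym2 V)
    rw [← hends] at hv
    rcases Sym2.mem_iff.1 hv with rfl | rfl
    exacts [⟨g, hLS g (List.mem_of_head? hg), hxg⟩, ⟨g', hLS g' (List.mem_of_getLast? hg'), hyg'⟩]
  calc {e | h ∈ L e}.ncard = (Subtype.val '' {e | h ∈ L e}).ncard :=
        (Set.ncard_image_of_injective _ Subtype.val_injective).symm
    _ ≤ T.card := (Set.ncard_le_ncard hsub T.finite_toSet).trans_eq (Set.ncard_coe_finset T)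
    _ ≤ 4 * S.card ^ 2 := hT
    _ ≤ 4 * (5 ^ k) ^ 2 := by gcongr
    _ = 4 * 25 ^ k := by rw [pow_right_comm]; norm_num

namespace Routing

variable [Finite V] {G : SimpleGraph V} (r : Routing G K)

theorem ncard_shared_le {m : ℕ}
    (hm : ∀ n ∉ Set.range r.node, {e | n ∈ (r.path e).1.support}.ncard ≤ m) (e : G.edgeSet) :
    (r.shared e).ncard ≤ ((r.path e).1.length + 1) * m := by
  classical
  have hfin (n : N) : {e | n ∈ (r.path e).1.support}.Finite := Set.toFinite _
  let S : Finset (N × G.edgeSet) :=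
    ((r.path e).1.support.toFinset.filter (· ∉ Set.range r.node)).biUnion
      fun n ↦ (hfin n).toFinset.image (Prod.mk n)
  have hsub : r.shared e ⊆ S := by
    rintro ⟨n, e'⟩ ⟨hn, -, hne, hne'⟩
    simp_all [S]
  calc (r.shared e).ncard ≤ S.card :=
        (Set.ncard_le_ncard hsub S.finite_toSet).trans_eq (Set.ncard_coe_finset S)
    _ ≤ ((r.path e).1.support.toFinset.filter (· ∉ Set.range r.node)).card * m :=
        Finset.card_biUnion_le_card_mul _ _ _ fun n hn ↦ Finset.card_image_le.trans <| by
          rw [← Set.ncard_eq_toFinset_card]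
          exact hm n (Finset.mem_filter.1 hn).2
    _ ≤ ((r.path e).1.length + 1) * m := by
        gcongr
        rw [← Walk.length_support]
        exact (Finset.card_filter_le _ _).trans (List.toFinset_card_le _)

end Routing

theorem four_mul_seven_mul_le_two_pow (k : ℕ) :
    4 * (7 * (k + 1) * (4 * 25 ^ k)) ≤ 2 ^ (8 * (k + 1)) := by
  have hk : k + 1 ≤ 2 ^ k := Nat.lt_two_pow_self
  calc 4 * (7 * (k + 1) * (4 * 25 ^ k)) ≤ 4 * (7 * 2 ^ k * (4 * 25 ^ k)) := by gcongr
    _ = 112 * 50 ^ k := by rw [show (50 : ℕ) = 2 * 25 from rfl, mul_pow]; ring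
    _ ≤ 256 * 256 ^ k := by gcongr <;> norm_num
    _ = 2 ^ (8 * (k + 1)) := by rw [pow_mul, pow_succ']; norm_num

/-! ### Near planarity -/

variable {G : SimpleGraph V} {l : ℕ} {τ : V → W} {L : G.edgeSet → List (Sym2 W)}
  {r : Routing G K} {owner : N → Sym2 W}

theorem SubgraphVia.exists_isWbwWalkFromTo (hτ : SubgraphVia G (R.power l) τ) (e : G.edgeSet) :
    ∃ L, IsWbwWalkFromTo R (τ (Quot.out (e : Sym2 V)).1) (τ (Quot.out (e : Sym2 V)).2) L ∧
      (L.length ≤ l ∨ L = [(e : Sym2 V).map τ]) := by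
  have hends : s((Quot.out (e : Sym2 V)).1, (Quot.out (e : Sym2 V)).2) = e :=
    Quot.out_eq (e : Sym2 V)
  have hadj : G.Adj (Quot.out (e : Sym2 V)).1 (Quot.out (e : Sym2 V)).2 := by
    rw [← mem_edgeSet, hends]
    exact e.2
  rw [← hends, Sym2.map_mk, hends]
  exact exists_isWbwWalkFromTo_of_power_adj (hτ.2 _ _ hadj)

namespace Routing

theorem shared_eq_empty (hτ : Function.Injective τ)
    (howner : ∀ e, ∀ n ∈ (r.path e).1.support,
      n ∉ Set.range r.node → owner n ∈ [(e : Sym2 V).map τ]) (e : G.edgeSet) :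
    r.shared e = ∅ := by
  refine Set.eq_empty_of_forall_notMem ?_
  rintro ⟨n, e'⟩ ⟨hn, hne, hmem, hmem'⟩
  have h := List.mem_singleton.1 (howner e n hmem hn)
  have h' := List.mem_singleton.1 (howner e' n hmem' hn)
  exact hne (Subtype.ext (Sym2.map.injective hτ (h'.symm.trans h)))

theorem four_mul_ncard_shared_le [Finite V] (hτ : Function.Injective τ) (hL : ∀ e : G.edgeSet,
      IsWbwWalkFromTo R (τ (Quot.out (e : Sym2 V)).1) (τ (Quot.out (e : Sym2 V)).2) (L e))
    (hlen : ∀ e, (L e).length ≤ l ∨ L e = [(e : Sym2 V).map τ])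
    (hpath : ∀ e, (r.path e).1.length ≤ 6 * (L e).length ∧
      ∀ n ∈ (r.path e).1.support, n ∉ Set.range r.node → owner n ∈ L e) (e : G.edgeSet) :
    4 * (r.shared e).ncard ≤ 2 ^ (8 * l) := by
  rcases l with _ | k
  · have hLe e : L e = [(e : Sym2 V).map τ] := (hlen e).resolve_left fun h ↦
      (hL e).1.1 (List.length_eq_zero_iff.1 (Nat.le_zero.1 h))
    have hempty := r.shared_eq_empty hτ (fun e n hn hn' ↦ hLe e ▸ (hpath e).2 n hn hn') e
    rw [hempty, Set.ncard_empty]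
    exact Nat.zero_le _
  have hlen' e : (L e).length ≤ k + 1 := (hlen e).elim id fun h ↦ by
    rw [h, List.length_singleton]
    exact Nat.le_add_left 1 k
  have husers n (hn : n ∉ Set.range r.node) :
      {e | n ∈ (r.path e).1.support}.ncard ≤ 4 * 25 ^ k :=
    (Set.ncard_le_ncard (fun e he ↦ (hpath e).2 n he hn) (Set.toFinite _)).trans
      (ncard_setOf_mem_wbwWalk_le hτ hL hlen' (owner n))
  have hpath_length : (r.path e).1.length + 1 ≤ 7 * (k + 1) := by
    linarith [(hpath e).1, hlen' e]
  calc 4 * (r.shared e).ncard ≤ 4 * (((r.path e).1.length + 1) * (4 * 25 ^ k)) :=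
        Nat.mul_le_mul_left 4 (r.ncard_shared_le husers e)
    _ ≤ 4 * (7 * (k + 1) * (4 * 25 ^ k)) := by gcongr
    _ ≤ 2 ^ (8 * (k + 1)) := four_mul_seven_mul_le_two_pow k

end Routing

theorem IsFlat.isNearlyPlanar (hG : IsFlat l G) : IsNearlyPlanar (2 ^ (8 * l)) G := by
  obtain ⟨W, _, R, τ, hR, hτ⟩ := hG
  have := Finite.of_injective τ hτ.1
  choose L hL hlen using hτ.exists_isWbwWalkFromTo
  obtain ⟨K, pos, hK, ⟨net⟩⟩ := hR.exists_net
  obtain ⟨r, hpath⟩ := net.exists_routing hτ.1 hL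
  obtain ⟨Dr, hDr⟩ := r.exists_drawing hK
  refine ⟨Dr, fun e he ↦ ⟨(hDr ⟨e, he⟩).1, (hDr ⟨e, he⟩).2.trans ?_⟩⟩
  exact r.four_mul_ncard_shared_le hτ.1 hL hlen hpath ⟨e, he⟩

/-! ### Flatness of finite graphs -/

namespace RotationSystem

theorem exists_graph_eq [Finite W] (G : SimpleGraph W) : ∃ R : RotationSystem W, R.G = G := by
  classical
  have hcycle (v : W) : ∃ σ : Equiv.Perm (Sym2 W), σ.IsCycleOn (incidentSet G v) ∧
      ∀ e ∉ incidentSet G v, σ e = e := by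
    obtain ⟨σ, hσ, hsupp⟩ := (Set.toFinite (incidentSet G v)).countable.exists_cycleOn
    exact ⟨σ, hσ, fun e he ↦ not_not.1 fun h ↦ he (hsupp h)⟩
  choose σ hσ hfixed using hcycle
  exact ⟨⟨G, σ, hσ, hfixed⟩, rfl⟩

theorem facePerm_eq_symm [Finite W] {d : R.G.Dart}
    (hleaf : ∀ u, R.G.Adj d.snd u → u = d.fst) : R.facePerm d = d.symm := by
  have hadj : R.G.Adj d.snd (R.facePerm d).snd := (R.facePerm d).adj
  exact Dart.ext _ _ (Prod.ext rfl (hleaf _ hadj))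

theorem isPlane_of_isTree [Finite W] [Nontrivial W] (hG : R.G.IsTree)
    (hface : ∀ d, R.face d.symm = R.face d) : R.IsPlane := by
  have hone : ∀ d d' : R.G.Dart, R.face d = R.face d' := fun d d' ↦
    of_component_eq (Q := fun a ↦ R.face d = R.face a)
      (fun a ha ↦ ha.trans (hface a).symm) (fun a ha ↦ ha.trans (R.face_facePerm a).symm)
      (ConnectedComponent.sound (hG.connected _ _)) rfl
  have hadj (v : W) : ∃ w, R.G.Adj v w := by
    rw [← mem_support, hG.connected.preconnected.support_eq_univ]
    exact Set.mem_univ v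
  have hfaces : R.numFaces = 1 := by
    obtain ⟨v⟩ := hG.connected.nonempty
    obtain ⟨w, hvw⟩ := hadj v
    refine Nat.card_eq_one_iff_exists.2 ⟨R.face ⟨(v, w), hvw⟩, ?_⟩
    rintro ⟨d⟩
    exact hone d _
  have hisolated : Nat.card {v : W | ∀ w, ¬R.G.Adj v w} = 0 := by
    have : IsEmpty {v : W | ∀ w, ¬R.G.Adj v w} := ⟨fun v ↦ (hadj v).elim v.2⟩
    exact Nat.card_of_isEmpty
  have hcomponents : Nat.card R.G.ConnectedComponent = 1 :=
    Nat.card_eq_one_iff_exists.2 ⟨R.G.connectedComponentMk hG.connected.nonempty.some,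
      fun C ↦ C.ind fun v ↦ ConnectedComponent.sound (hG.connected _ _)⟩
  have hedges := (isTree_iff_connected_and_card.1 hG).2
  rw [IsPlane, hfaces, hisolated, hcomponents, ← hedges]

theorem isPlane_of_graph_eq_starGraph [Finite W] [Nontrivial W] {c : W} (hR : R.G = starGraph c) :
    R.IsPlane := by
  have hadj u v : R.G.Adj u v ↔ u ≠ v ∧ (u = c ∨ v = c) := by rw [hR, starGraph_adj]
  have hleaf (d : R.G.Dart) (hd : d.snd ≠ c) : R.facePerm d = d.symm :=
    facePerm_eq_symm fun u hu ↦ by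
      rw [(((hadj _ _).1 hu).2.resolve_left hd), (((hadj _ _).1 d.adj).2.resolve_right hd)]
  refine isPlane_of_isTree (hR ▸ isTree_starGraph c) fun d ↦ ?_
  by_cases hd : d.snd = c
  · have hsymm : d.symm.snd ≠ c := fun h ↦ d.adj.ne (h.trans hd.symm)
    rw [← face_facePerm R d.symm, hleaf d.symm hsymm, Dart.symm_symm]
  · rw [← hleaf d hd, face_facePerm]

theorem medial_reachable [Finite W] {d d' : R.G.Dart} (h : d.snd = d'.snd) :
    (medial R).Reachable ⟨d.edge, d.edge_mem⟩ ⟨d'.edge, d'.edge_mem⟩ := by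
  refine of_snd_eq (Q := fun a ↦ (medial R).Reachable ⟨d.edge, d.edge_mem⟩ ⟨a.edge, a.edge_mem⟩)
    (fun a ha ↦ ha.trans ?_) h .rfl
  by_cases heq : a.edge = (R.facePerm a).symm.edge
  · simp only [← heq, Reachable.rfl]
  · refine Adj.reachable ((fromRel_adj _ _ _).2 ⟨fun h ↦ heq (congrArg Subtype.val h), .inl ?_⟩)
    exact ⟨a.snd, R.edge_mem_incidentSet a, R.edge_mem_incidentSet (R.facePerm a).symm, .inl <| by
      simp only [Dart.edge_symm, facePerm_apply, edge_faceNext]⟩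

theorem wbwDist_le_of_medial_reachable [Finite W] {x y : W} {e e' : {e // e ∈ R.G.edgeSet}}
    (hx : x ∈ e.1) (hy : y ∈ e'.1) (h : (medial R).Reachable e e') :
    wbwDist R x y ≤ Nat.card R.G.edgeSet := by
  classical
  have := Fintype.ofFinite {e // e ∈ R.G.edgeSet}
  obtain ⟨p, hp⟩ := h.exists_isPath
  have hattached {a b} (hab : (medial R).Adj a b) : Attached R a.1 b.1 :=
    ((fromRel_adj _ _ _).1 hab).2.elim id Attached.symm
  have hwalk : IsWbwWalkFromTo R x y (p.support.map Subtype.val) := by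
    refine ⟨⟨mt List.map_eq_nil_iff.1 p.support_ne_nil,
      hp.support_nodup.map Subtype.val_injective, List.forall_mem_map.2 fun e _ ↦ e.2, ?_⟩,
      ⟨e, ?_, hx⟩, ⟨e', ?_, hy⟩⟩
    · exact (List.isChain_map _).2 (p.isChain_adj_support.imp fun _ _ ↦ hattached)
    · rw [List.head?_map, List.head?_eq_some_head p.support_ne_nil, p.head_support, Option.map_some]
    · rw [List.getLast?_map, List.getLast?_eq_some_getLast p.support_ne_nil, p.getLast_support,
        Option.map_some]
  calc wbwDist R x y ≤ (p.support.map Subtype.val).length := sInf_le ⟨_, hwalk, rfl⟩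
    _ ≤ Nat.card R.G.edgeSet := by
      rw [List.length_map, Nat.card_eq_fintype_card, Nat.cast_le]
      exact hp.support_nodup.length_le_card

end RotationSystem

theorem exists_isFlat [Finite V] (G : SimpleGraph V) : ∃ l, IsFlat l G := by
  let τ (v : V) : Fin (Nat.card V + 2) := (Finite.equivFin V v).castSucc.succ
  have hτ : Function.Injective τ := (Fin.succ_injective _).comp <|
    (Fin.castSucc_injective _).comp (Finite.equivFin V).injective
  obtain ⟨R, hR⟩ := RotationSystem.exists_graph_eq (starGraph (0 : Fin (Nat.card V + 2)))
  let spoke (v : V) : R.G.Dart := ⟨(τ v, 0), by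
    rw [hR]
    exact starGraph_center_adj' (Fin.succ_ne_zero (Finite.equivFin V v).castSucc).symm⟩
  refine ⟨Nat.card R.G.edgeSet, _, inferInstance, R, τ,
    RotationSystem.isPlane_of_graph_eq_starGraph hR, hτ, fun x y hxy ↦ .inr ?_⟩
  refine (fromRel_adj _ _ _).2 ⟨hτ.ne hxy.ne, .inl ?_⟩
  exact RotationSystem.wbwDist_le_of_medial_reachable (Sym2.mem_mk_left _ _) (Sym2.mem_mk_left _ _)
    (RotationSystem.medial_reachable (d := spoke x) (d' := spoke y) rfl)

end WBW

theorem nearNum_le_exp_flatNum_general {V : Type*} [Finite V] (G : SimpleGraph V) :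
    WBW.nearNum G ≤ 2 ^ (8 * WBW.flatNum G) ∧
    ∀ l : ℕ, WBW.IsFlat l G → WBW.IsNearlyPlanar (2 ^ (8 * l)) G :=
  have hflat : WBW.IsFlat (WBW.flatNum G) G := Nat.sInf_mem (WBW.exists_isFlat G)
  ⟨Nat.sInf_le hflat.isNearlyPlanar, fun _ hl ↦ hl.isNearlyPlanar⟩

/-- `ξ(G) ≤ 2^{8·λ(G)}`; if `G` is `λ`-flat, then `G` has an embedding
in the sphere with at most `2^{8λ}` crossings per edge. -/
theorem nearNum_le_exp_flatNum (V : Type) [Finite V] (G : SimpleGraph V) :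
    WBW.nearNum G ≤ 2 ^ (8 * WBW.flatNum G) ∧
    ∀ l : ℕ, WBW.IsFlat l G → WBW.IsNearlyPlanar (2 ^ (8 * l)) G :=
  nearNum_le_exp_flatNum_general G
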